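/- (Proposition 1, Cover-El Gamal-Salehi) Let (S,T) be a discrete memoryless correlated source with finite alphabets and joint pmf p(s,t), and let K = f(S) = g(T) be a common part of (S,T). Suppose there exist a finite-valued auxiliary random variable W and channel inputs X1, X2 whose joint distribution with (S,T) factors as p(s,t,w,x1,x2) = p(w)·p(s,t)·p(x1|s,w)·p(x2|t,w), and let Y be obtained from (X1,X2) through the multiple access channel p(y|x1,x2). If H(S|T) < I(X1; Y | X2,S,W), H(T|S) < I(X2; Y | X1,T,W), H(S,T|K) < I(X1,X2; Y | K,W), and H(S,T) < I(X1,X2; Y), then the source pair (S,T) can be sent with arbitrarily small probability of error over the multiple access channel p(y|x1,x2). -/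

import Mathlib

/-!
The proof is by random coding, with a likelihood threshold decoder in place of joint typicality.

Codebook: independently draw a word `w(k)` for every value `k` of the common part, a word `x1(s, w)`
for every `s` and `w`, and a word `x2(t, w)` for every `t` and `w`. As `K = f(S) = g(T)`, both
senders know `w(K)`, and they transmit `x1(S, w(K))` and `x2(T, w(K))`. On receiving `y`, the
decoder picks a pair `(s, t)` of positive probability for which the four ratios

* `L1 = p(s | t) · p(x1, y | x2, s, w) / (p(x1 | x2, s, w) p(y | x2, s, w))`,
* `L2 = p(t | s) · p(x2, y | x1, t, w) / (p(x2 | x1, t, w) p(y | x1, t, w))`,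
* `L3 = p(s, t | k) · p(x1, x2, y | k, w) / (p(x1, x2 | k, w) p(y | k, w))`,
* `L4 = p(s, t) · p(x1, x2, y) / (p(x1, x2) p(y))`

all reach a threshold `θ`. A wrong pair is caught by the ratio matching its kind: only `s` wrong,
only `t` wrong, both wrong with the right `k`, everything wrong. In each case the wrong codewords
are independent of `y`, and summing the mean of the ratio over all wrong pairs gives at most `1`, so
that wrong pairs contribute at most `4 / θ` to the error probability. This is the one-shot bound
`oneShot`; the independence enters through `avg_resample`, which redraws one codeword.

For `n` letters the ratios are products. The expected logarithm of each one-letter ratio at the true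
variables is the corresponding mutual information minus the corresponding entropy
(`sum_log_cratio`, `sum_log_ratio`), hence positive by hypothesis. With `θ = exp (n d)` for a small
`d > 0`, Chernoff's bound (`chernoff`) makes the probability that the true pair fails a test
exponentially small, and so is `4 / θ` (`sendable_of_ratios`).
-/

/-- Shannon entropy (in bits) of the push-forward of the pmf `p` under the map `f`. -/
noncomputable def margEnt {Ω α : Type*} [Fintype Ω] [Fintype α] [DecidableEq α]
    (p : Ω → ℝ) (f : Ω → α) : ℝ :=
  ∑ a : α, -((∑ ω : Ω, if f ω = a then p ω else 0) *
      Real.logb 2 (∑ ω : Ω, if f ω = a then p ω else 0))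

/-- Conditional entropy H(f | g). -/
noncomputable def condEnt {Ω α β : Type*} [Fintype Ω] [Fintype α] [Fintype β]
    [DecidableEq α] [DecidableEq β] (p : Ω → ℝ) (f : Ω → α) (g : Ω → β) : ℝ :=
  margEnt p (fun ω => (f ω, g ω)) - margEnt p g

/-- Mutual information I(f ; g). -/
noncomputable def mi {Ω α β : Type*} [Fintype Ω] [Fintype α] [Fintype β]
    [DecidableEq α] [DecidableEq β] (p : Ω → ℝ) (f : Ω → α) (g : Ω → β) : ℝ :=
  margEnt p f + margEnt p g - margEnt p (fun ω => (f ω, g ω))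

/-- Conditional mutual information I(f ; g | h). -/
noncomputable def cmi {Ω α β γ : Type*} [Fintype Ω] [Fintype α] [Fintype β] [Fintype γ]
    [DecidableEq α] [DecidableEq β] [DecidableEq γ]
    (p : Ω → ℝ) (f : Ω → α) (g : Ω → β) (h : Ω → γ) : ℝ :=
  margEnt p (fun ω => (f ω, h ω)) + margEnt p (fun ω => (g ω, h ω))
    - margEnt p (fun ω => (f ω, g ω, h ω)) - margEnt p h

/-- Shannon entropy (in bits) of a pmf. -/
noncomputable def pmfEnt {α : Type*} [Fintype α] (q : α → ℝ) : ℝ :=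
  ∑ a : α, -(q a * Real.logb 2 (q a))

/-- Probability of error of a length-`n` source-channel code for the multiple access
channel `chan` with correlated source `pST`. -/
noncomputable def macPe {S T X1 X2 Y : Type*} [Fintype S] [Fintype T] [Fintype X1]
    [Fintype X2] [Fintype Y] [DecidableEq S] [DecidableEq T]
    (pST : S → T → ℝ) (chan : X1 → X2 → Y → ℝ) (n : ℕ)
    (f1 : (Fin n → S) → Fin n → X1) (f2 : (Fin n → T) → Fin n → X2)
    (φ : (Fin n → Y) → (Fin n → S) × (Fin n → T)) : ℝ :=
  ∑ sn : Fin n → S, ∑ tn : Fin n → T, ∑ yn : Fin n → Y,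
    if φ yn ≠ (sn, tn) then
      (∏ i, pST (sn i) (tn i)) * ∏ i, chan (f1 sn i) (f2 tn i) (yn i)
    else 0

/-- The source `pST` can be sent with arbitrarily small probability of error over the
multiple access channel `chan`. -/
def MACSendable {S T X1 X2 Y : Type*} [Fintype S] [Fintype T] [Fintype X1]
    [Fintype X2] [Fintype Y] [DecidableEq S] [DecidableEq T]
    (pST : S → T → ℝ) (chan : X1 → X2 → Y → ℝ) : Prop :=
  ∀ ε : ℝ, 0 < ε → ∃ N : ℕ, ∀ n : ℕ, N ≤ n →
    ∃ (f1 : (Fin n → S) → Fin n → X1) (f2 : (Fin n → T) → Fin n → X2)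
      (φ : (Fin n → Y) → (Fin n → S) × (Fin n → T)),
      macPe pST chan n f1 f2 φ ≤ ε

/-- Sample space for the Cover-El Gamal-Salehi scheme. -/
abbrev Omega6 (S T W X1 X2 Y : Type*) := S × T × W × X1 × X2 × Y

section Proj
variable {S T W X1 X2 Y : Type*}
def mS  (ω : Omega6 S T W X1 X2 Y) : S := ω.1
def mT  (ω : Omega6 S T W X1 X2 Y) : T := ω.2.1
def mW  (ω : Omega6 S T W X1 X2 Y) : W := ω.2.2.1
def mX1 (ω : Omega6 S T W X1 X2 Y) : X1 := ω.2.2.2.1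
def mX2 (ω : Omega6 S T W X1 X2 Y) : X2 := ω.2.2.2.2.1
def mY  (ω : Omega6 S T W X1 X2 Y) : Y := ω.2.2.2.2.2
end Proj

/-! ### Expectation over a random function -/

section Avg
variable {A B : Type*} [Fintype A] [Fintype B] [DecidableEq A]

/-- Expectation of `F c` when the values `c a` of the random function `c : A → B` are
independent, `c a` having the pmf `q a`. -/
noncomputable def avg (q : A → B → ℝ) (F : (A → B) → ℝ) : ℝ :=
  ∑ c : A → B, (∏ a, q a (c a)) * F c

theorem avg_mono {q : A → B → ℝ} (hq : ∀ a b, 0 ≤ q a b) {F G : (A → B) → ℝ}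
    (h : ∀ c, F c ≤ G c) : avg q F ≤ avg q G :=
  Finset.sum_le_sum fun c _ =>
    mul_le_mul_of_nonneg_left (h c) (Finset.prod_nonneg fun a _ => hq a _)

theorem avg_const {q : A → B → ℝ} (hq : ∀ a, ∑ b, q a b = 1) (r : ℝ) :
    avg q (fun _ => r) = r := by
  unfold avg
  rw [← Finset.sum_mul, ← Fintype.piFinset_univ, ← Finset.prod_univ_sum]
  simp [hq]

theorem avg_add (q : A → B → ℝ) (F G : (A → B) → ℝ) :
    avg q (fun c => F c + G c) = avg q F + avg q G := by
  simp only [avg, mul_add, Finset.sum_add_distrib]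

theorem avg_mul_left (q : A → B → ℝ) (r : ℝ) (F : (A → B) → ℝ) :
    avg q (fun c => r * F c) = r * avg q F := by
  simp only [avg, Finset.mul_sum]
  exact Finset.sum_congr rfl fun c _ => by ring

theorem avg_sum {J : Type*} (s : Finset J) (q : A → B → ℝ) (F : J → (A → B) → ℝ) :
    avg q (fun c => ∑ j ∈ s, F j c) = ∑ j ∈ s, avg q (F j) := by
  simp only [avg, Finset.mul_sum]
  exact Finset.sum_comm

theorem exists_le_avg {q : A → B → ℝ} (hq0 : ∀ a b, 0 ≤ q a b) (hq : ∀ a, ∑ b, q a b = 1)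
    (F : (A → B) → ℝ) : ∃ c, F c ≤ avg q F := by
  -- `A` may be empty, so `B` is inhabited only in the presence of some `a : A`
  have hne : ∀ a : A, Nonempty B := fun a => by
    by_contra h
    rw [not_nonempty_iff] at h
    simpa using hq a
  have : Nonempty (A → B) := ⟨fun a => (hne a).some⟩
  obtain ⟨c, hc⟩ := Finite.exists_min F
  exact ⟨c, (avg_const hq (F c)).symm.trans_le (avg_mono hq0 hc)⟩

/-- Redrawing the single value `c a` from its own law `q a` does not change an expectation. -/
theorem avg_resample {q : A → B → ℝ} (hq : ∀ a, ∑ b, q a b = 1) (a : A) (F : (A → B) → ℝ) :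
    avg q F = avg q (fun c => ∑ b, q a b * F (Function.update c a b)) := by
  -- exchanging the old value `c a` with the new value `b` is a weight-preserving involution
  let e : (A → B) × B → (A → B) × B := fun z => (Function.update z.1 a z.2, z.1 a)
  have he : Function.Involutive e := fun z => by simp [e]
  have hw : ∀ (c : A → B) (b : B), (∏ x, q x (Function.update c a b x)) * q a (c a)
      = (∏ x, q x (c x)) * q a b := by
    intro c b
    rw [← Finset.mul_prod_erase Finset.univ _ (Finset.mem_univ a),
      ← Finset.mul_prod_erase Finset.univ (fun x => q x (c x)) (Finset.mem_univ a)]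
    rw [Finset.prod_congr rfl (g := fun x => q x (c x))]
    · simp; ring
    · intro x hx
      rw [Function.update_of_ne (Finset.ne_of_mem_erase hx)]
  have h1 : avg q F = ∑ z : (A → B) × B, (∏ x, q x (z.1 x)) * q a z.2 * F z.1 := by
    rw [Fintype.sum_prod_type]
    refine Finset.sum_congr rfl fun c _ => ?_
    simp only [← Finset.sum_mul, ← Finset.mul_sum, hq, mul_one]
  rw [h1, ← (Equiv.sum_comp he.toPerm _), Fintype.sum_prod_type]
  refine Finset.sum_congr rfl fun c _ => ?_
  rw [Finset.mul_sum]
  refine Finset.sum_congr rfl fun b _ => ?_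
  simp only [Function.Involutive.coe_toPerm, e]
  rw [hw]; ring

end Avg

/-! ### The random codebook -/

section Book
variable {S T K W X1 X2 : Type*} [Fintype S] [Fintype T] [Fintype K] [Fintype W]
  [Fintype X1] [Fintype X2] [DecidableEq S] [DecidableEq T] [DecidableEq K] [DecidableEq W]

/-- Expectation over the random codebook: a word `wb k` with law `pW` for every `k`, a word
`b1 (s, w)` with law `pX1 s w` for every pair `(s, w)`, and a word `b2 (t, w)` with law `pX2 t w`
for every pair `(t, w)`, all independent. -/
noncomputable def bookAvg (pW : W → ℝ) (pX1 : S → W → X1 → ℝ) (pX2 : T → W → X2 → ℝ)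
    (F : (K → W) → (S × W → X1) → (T × W → X2) → ℝ) : ℝ :=
  avg (fun _ : K => pW) fun wb => avg (fun a : S × W => pX1 a.1 a.2) fun b1 =>
    avg (fun a : T × W => pX2 a.1 a.2) fun b2 => F wb b1 b2

variable {pW : W → ℝ} {pX1 : S → W → X1 → ℝ} {pX2 : T → W → X2 → ℝ}

theorem bookAvg_mono (hpWnn : ∀ w, 0 ≤ pW w) (hpX1nn : ∀ s w x1, 0 ≤ pX1 s w x1)
    (hpX2nn : ∀ t w x2, 0 ≤ pX2 t w x2)
    {F G : (K → W) → (S × W → X1) → (T × W → X2) → ℝ} (h : ∀ wb b1 b2, F wb b1 b2 ≤ G wb b1 b2) :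
    bookAvg pW pX1 pX2 F ≤ bookAvg pW pX1 pX2 G :=
  avg_mono (fun _ => hpWnn) fun wb => avg_mono (fun a => hpX1nn a.1 a.2) fun b1 =>
    avg_mono (fun a => hpX2nn a.1 a.2) fun b2 => h wb b1 b2

theorem bookAvg_add (F G : (K → W) → (S × W → X1) → (T × W → X2) → ℝ) :
    bookAvg pW pX1 pX2 (fun wb b1 b2 => F wb b1 b2 + G wb b1 b2)
      = bookAvg pW pX1 pX2 F + bookAvg pW pX1 pX2 G := by
  simp only [bookAvg, avg_add]

theorem bookAvg_mul_left (r : ℝ) (F : (K → W) → (S × W → X1) → (T × W → X2) → ℝ) :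
    bookAvg pW pX1 pX2 (fun wb b1 b2 => r * F wb b1 b2) = r * bookAvg pW pX1 pX2 F := by
  simp only [bookAvg, avg_mul_left]

theorem bookAvg_sum {J : Type*} (s : Finset J)
    (F : J → (K → W) → (S × W → X1) → (T × W → X2) → ℝ) :
    bookAvg pW pX1 pX2 (fun wb b1 b2 => ∑ j ∈ s, F j wb b1 b2)
      = ∑ j ∈ s, bookAvg pW pX1 pX2 (F j) := by
  simp only [bookAvg, avg_sum]

theorem bookAvg_const (hpWsum : ∑ w, pW w = 1) (hpX1sum : ∀ s w, ∑ x1, pX1 s w x1 = 1)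
    (hpX2sum : ∀ t w, ∑ x2, pX2 t w x2 = 1) (r : ℝ) :
    bookAvg (K := K) pW pX1 pX2 (fun _ _ _ => r) = r := by
  have h2 : ∀ r, avg (fun a : T × W => pX2 a.1 a.2) (fun _ => r) = r :=
    avg_const fun a => hpX2sum a.1 a.2
  have h1 : ∀ r, avg (fun a : S × W => pX1 a.1 a.2) (fun _ => r) = r :=
    avg_const fun a => hpX1sum a.1 a.2
  have h0 : ∀ r, avg (fun _ : K => pW) (fun _ => r) = r := avg_const fun _ => hpWsum
  simp only [bookAvg, h0, h1, h2]

theorem bookAvg_resW (hpWsum : ∑ w, pW w = 1) (k : K)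
    (F : (K → W) → (S × W → X1) → (T × W → X2) → ℝ) :
    bookAvg pW pX1 pX2 F = bookAvg pW pX1 pX2
      (fun wb b1 b2 => ∑ w, pW w * F (Function.update wb k w) b1 b2) := by
  unfold bookAvg
  rw [avg_resample (fun _ => hpWsum) k]
  simp only [avg_sum, avg_mul_left]

/-- The redrawn coordinate `(s, h wb)` is allowed to depend on the words `wb`. -/
theorem bookAvg_resX1 (hpX1sum : ∀ s w, ∑ x1, pX1 s w x1 = 1) (s : S) (h : (K → W) → W)
    (F : (K → W) → (S × W → X1) → (T × W → X2) → ℝ) :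
    bookAvg pW pX1 pX2 F = bookAvg pW pX1 pX2
      (fun wb b1 b2 => ∑ x, pX1 s (h wb) x * F wb (Function.update b1 (s, h wb) x) b2) := by
  unfold bookAvg
  congr 1; funext wb
  simp only [avg_sum, avg_mul_left]
  rw [avg_resample (fun a => hpX1sum a.1 a.2) (s, h wb)]
  simp only [avg_sum, avg_mul_left]

theorem bookAvg_resX2 (hpX2sum : ∀ t w, ∑ x2, pX2 t w x2 = 1) (t : T) (h : (K → W) → W)
    (F : (K → W) → (S × W → X1) → (T × W → X2) → ℝ) :
    bookAvg pW pX1 pX2 F = bookAvg pW pX1 pX2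
      (fun wb b1 b2 => ∑ x, pX2 t (h wb) x * F wb b1 (Function.update b2 (t, h wb) x)) := by
  unfold bookAvg
  congr 1; funext wb; congr 1; funext b1
  rw [avg_resample (fun a => hpX2sum a.1 a.2) (t, h wb)]

theorem exists_le_bookAvg (hpWnn : ∀ w, 0 ≤ pW w) (hpX1nn : ∀ s w x1, 0 ≤ pX1 s w x1)
    (hpX2nn : ∀ t w x2, 0 ≤ pX2 t w x2)
    (hpWsum : ∑ w, pW w = 1) (hpX1sum : ∀ s w, ∑ x1, pX1 s w x1 = 1)
    (hpX2sum : ∀ t w, ∑ x2, pX2 t w x2 = 1)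
    (F : (K → W) → (S × W → X1) → (T × W → X2) → ℝ) :
    ∃ wb b1 b2, F wb b1 b2 ≤ bookAvg pW pX1 pX2 F := by
  obtain ⟨wb, hwb⟩ := exists_le_avg (fun _ : K => hpWnn) (fun _ => hpWsum)
    (fun wb => avg (fun a : S × W => pX1 a.1 a.2) fun b1 =>
      avg (fun a : T × W => pX2 a.1 a.2) fun b2 => F wb b1 b2)
  obtain ⟨b1, hb1⟩ := exists_le_avg (fun a : S × W => hpX1nn a.1 a.2) (fun a => hpX1sum a.1 a.2)
    (fun b1 => avg (fun a : T × W => pX2 a.1 a.2) fun b2 => F wb b1 b2)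
  obtain ⟨b2, hb2⟩ := exists_le_avg (fun a : T × W => hpX2nn a.1 a.2) (fun a => hpX2sum a.1 a.2)
    (fun b2 => F wb b1 b2)
  exact ⟨wb, b1, b2, hb2.trans (hb1.trans hwb)⟩

/-- The codewords attached to one triple `(k, s, t)` have the joint law prescribed by
`pW`, `pX1` and `pX2`. -/
theorem bookAvg_word (hpWsum : ∑ w, pW w = 1) (hpX1sum : ∀ s w, ∑ x1, pX1 s w x1 = 1)
    (hpX2sum : ∀ t w, ∑ x2, pX2 t w x2 = 1) (s : S) (t : T) (k : K) (G : W → X1 → X2 → ℝ) :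
    bookAvg pW pX1 pX2 (fun wb b1 b2 => G (wb k) (b1 (s, wb k)) (b2 (t, wb k)))
      = ∑ w, ∑ x1, ∑ x2, pW w * pX1 s w x1 * pX2 t w x2 * G w x1 x2 := by
  rw [bookAvg_resX2 hpX2sum t (fun wb => wb k), bookAvg_resX1 hpX1sum s (fun wb => wb k),
    bookAvg_resW hpWsum k]
  simp only [Function.update_self]
  rw [bookAvg_const hpWsum hpX1sum hpX2sum]
  simp only [Finset.mul_sum]
  refine Finset.sum_congr rfl fun w _ => Finset.sum_congr rfl fun x1 _ =>
    Finset.sum_congr rfl fun x2 _ => by ring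

variable (hpWnn : ∀ w, 0 ≤ pW w) (hpX1nn : ∀ s w x1, 0 ≤ pX1 s w x1)
  (hpX2nn : ∀ t w x2, 0 ≤ pX2 t w x2)
include hpWnn hpX1nn hpX2nn

/-- Union bound over the wrong messages of the first sender: their codewords are independent of
the channel output, whose law enters only through the factor `c`. -/
theorem bookAvg_wrong1 (hpX1sum : ∀ s w, ∑ x1, pX1 s w x1 = 1)
    (c : X1 → X2 → ℝ) (hc : ∀ x1 x2, 0 ≤ c x1 x2) (l : S → W → X1 → X2 → ℝ)
    (hl0 : ∀ s w x1 x2, 0 ≤ l s w x1 x2)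
    (hl : ∀ w x2, ∑ s, ∑ x1, pX1 s w x1 * l s w x1 x2 ≤ 1) (s : S) (t : T) (k : K) :
    bookAvg pW pX1 pX2 (fun wb b1 b2 => c (b1 (s, wb k)) (b2 (t, wb k)) *
        ∑ s', if s' = s then 0 else l s' (wb k) (b1 (s', wb k)) (b2 (t, wb k)))
      ≤ bookAvg pW pX1 pX2 (fun wb b1 b2 => c (b1 (s, wb k)) (b2 (t, wb k))) := by
  calc _ = ∑ s', bookAvg pW pX1 pX2 (fun wb b1 b2 => c (b1 (s, wb k)) (b2 (t, wb k)) *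
        if s' = s then 0 else l s' (wb k) (b1 (s', wb k)) (b2 (t, wb k))) := by
          simp only [Finset.mul_sum, bookAvg_sum]
    _ = ∑ s', bookAvg pW pX1 pX2 (fun wb b1 b2 => c (b1 (s, wb k)) (b2 (t, wb k)) *
        if s' = s then 0 else ∑ x, pX1 s' (wb k) x * l s' (wb k) x (b2 (t, wb k))) := by
          refine Finset.sum_congr rfl fun s' _ => ?_
          split_ifs with h
          · rfl
          · rw [bookAvg_resX1 hpX1sum s' (fun wb => wb k)]
            congr 1; funext wb b1 b2
            rw [Finset.mul_sum]
            refine Finset.sum_congr rfl fun x _ => ?_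
            rw [Function.update_self, Function.update_of_ne (by simpa using Ne.symm h)]
            ring
    _ = bookAvg pW pX1 pX2 (fun wb b1 b2 => c (b1 (s, wb k)) (b2 (t, wb k)) *
        ∑ s', if s' = s then 0 else ∑ x, pX1 s' (wb k) x * l s' (wb k) x (b2 (t, wb k))) := by
          simp only [Finset.mul_sum, bookAvg_sum]
    _ ≤ _ := by
          refine bookAvg_mono hpWnn hpX1nn hpX2nn fun wb b1 b2 => ?_
          refine mul_le_of_le_one_right (hc _ _) ((Finset.sum_le_sum fun s' _ => ?_).trans
            (hl (wb k) (b2 (t, wb k))))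
          split_ifs
          · exact Finset.sum_nonneg fun x _ => mul_nonneg (hpX1nn _ _ _) (hl0 _ _ _ _)
          · exact le_rfl

/-- The counterpart of `bookAvg_wrong1` for the second sender. -/
theorem bookAvg_wrong2 (hpX2sum : ∀ t w, ∑ x2, pX2 t w x2 = 1)
    (c : X1 → X2 → ℝ) (hc : ∀ x1 x2, 0 ≤ c x1 x2) (l : T → W → X1 → X2 → ℝ)
    (hl0 : ∀ t w x1 x2, 0 ≤ l t w x1 x2)
    (hl : ∀ w x1, ∑ t, ∑ x2, pX2 t w x2 * l t w x1 x2 ≤ 1) (s : S) (t : T) (k : K) :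
    bookAvg pW pX1 pX2 (fun wb b1 b2 => c (b1 (s, wb k)) (b2 (t, wb k)) *
        ∑ t', if t' = t then 0 else l t' (wb k) (b1 (s, wb k)) (b2 (t', wb k)))
      ≤ bookAvg pW pX1 pX2 (fun wb b1 b2 => c (b1 (s, wb k)) (b2 (t, wb k))) := by
  calc _ = ∑ t', bookAvg pW pX1 pX2 (fun wb b1 b2 => c (b1 (s, wb k)) (b2 (t, wb k)) *
        if t' = t then 0 else l t' (wb k) (b1 (s, wb k)) (b2 (t', wb k))) := by
          simp only [Finset.mul_sum, bookAvg_sum]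
    _ = ∑ t', bookAvg pW pX1 pX2 (fun wb b1 b2 => c (b1 (s, wb k)) (b2 (t, wb k)) *
        if t' = t then 0 else ∑ x, pX2 t' (wb k) x * l t' (wb k) (b1 (s, wb k)) x) := by
          refine Finset.sum_congr rfl fun t' _ => ?_
          split_ifs with h
          · rfl
          · rw [bookAvg_resX2 hpX2sum t' (fun wb => wb k)]
            congr 1; funext wb b1 b2
            rw [Finset.mul_sum]
            refine Finset.sum_congr rfl fun x _ => ?_
            rw [Function.update_self, Function.update_of_ne (by simpa using Ne.symm h)]
            ring
    _ = bookAvg pW pX1 pX2 (fun wb b1 b2 => c (b1 (s, wb k)) (b2 (t, wb k)) *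
        ∑ t', if t' = t then 0 else ∑ x, pX2 t' (wb k) x * l t' (wb k) (b1 (s, wb k)) x) := by
          simp only [Finset.mul_sum, bookAvg_sum]
    _ ≤ _ := by
          refine bookAvg_mono hpWnn hpX1nn hpX2nn fun wb b1 b2 => ?_
          refine mul_le_of_le_one_right (hc _ _) ((Finset.sum_le_sum fun t' _ => ?_).trans
            (hl (wb k) (b1 (s, wb k))))
          split_ifs
          · exact Finset.sum_nonneg fun x _ => mul_nonneg (hpX2nn _ _ _) (hl0 _ _ _ _)
          · exact le_rfl

/-- Both messages are wrong but the common part `k` is right, so that the word `wb k` is shared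
with the true messages. -/
theorem bookAvg_wrong3 (hpX1sum : ∀ s w, ∑ x1, pX1 s w x1 = 1)
    (hpX2sum : ∀ t w, ∑ x2, pX2 t w x2 = 1)
    (c : X1 → X2 → ℝ) (hc : ∀ x1 x2, 0 ≤ c x1 x2) (l : S → T → W → X1 → X2 → ℝ)
    (hl0 : ∀ s t w x1 x2, 0 ≤ l s t w x1 x2)
    (hl : ∀ w, ∑ s, ∑ t, ∑ x1, ∑ x2, pX1 s w x1 * pX2 t w x2 * l s t w x1 x2 ≤ 1)
    (s : S) (t : T) (k : K) :
    bookAvg pW pX1 pX2 (fun wb b1 b2 => c (b1 (s, wb k)) (b2 (t, wb k)) *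
        ∑ s', ∑ t', if s' = s ∨ t' = t then 0 else
          l s' t' (wb k) (b1 (s', wb k)) (b2 (t', wb k)))
      ≤ bookAvg pW pX1 pX2 (fun wb b1 b2 => c (b1 (s, wb k)) (b2 (t, wb k))) := by
  calc _ = ∑ s', ∑ t', bookAvg pW pX1 pX2 (fun wb b1 b2 => c (b1 (s, wb k)) (b2 (t, wb k)) *
        if s' = s ∨ t' = t then 0 else l s' t' (wb k) (b1 (s', wb k)) (b2 (t', wb k))) := by
          simp only [Finset.mul_sum, bookAvg_sum]
    _ = ∑ s', ∑ t', bookAvg pW pX1 pX2 (fun wb b1 b2 => c (b1 (s, wb k)) (b2 (t, wb k)) *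
        if s' = s ∨ t' = t then 0 else
          ∑ x1, ∑ x2, pX1 s' (wb k) x1 * pX2 t' (wb k) x2 * l s' t' (wb k) x1 x2) := by
          refine Finset.sum_congr rfl fun s' _ => Finset.sum_congr rfl fun t' _ => ?_
          split_ifs with h
          · rfl
          · rw [not_or] at h
            rw [bookAvg_resX2 hpX2sum t' (fun wb => wb k), bookAvg_resX1 hpX1sum s' (fun wb => wb k)]
            congr 1; funext wb b1 b2
            simp only [Finset.mul_sum]
            refine Finset.sum_congr rfl fun x1 _ => Finset.sum_congr rfl fun x2 _ => ?_
            rw [Function.update_self, Function.update_self,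
              Function.update_of_ne (by simpa using Ne.symm h.1),
              Function.update_of_ne (by simpa using Ne.symm h.2)]
            ring
    _ = bookAvg pW pX1 pX2 (fun wb b1 b2 => c (b1 (s, wb k)) (b2 (t, wb k)) *
        ∑ s', ∑ t', if s' = s ∨ t' = t then 0 else
          ∑ x1, ∑ x2, pX1 s' (wb k) x1 * pX2 t' (wb k) x2 * l s' t' (wb k) x1 x2) := by
          simp only [Finset.mul_sum, bookAvg_sum]
    _ ≤ _ := by
          refine bookAvg_mono hpWnn hpX1nn hpX2nn fun wb b1 b2 => ?_
          refine mul_le_of_le_one_right (hc _ _) ((Finset.sum_le_sum fun s' _ =>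
            Finset.sum_le_sum fun t' _ => ?_).trans (hl (wb k)))
          split_ifs
          · exact Finset.sum_nonneg fun x _ => Finset.sum_nonneg fun x' _ =>
              mul_nonneg (mul_nonneg (hpX1nn _ _ _) (hpX2nn _ _ _)) (hl0 _ _ _ _ _)
          · exact le_rfl

/-- The common part is wrong too, so that the word `wb (f s')` is independent of the channel
output and has to be averaged out as well. -/
theorem bookAvg_wrong4 (hpWsum : ∑ w, pW w = 1) (hpX1sum : ∀ s w, ∑ x1, pX1 s w x1 = 1)
    (hpX2sum : ∀ t w, ∑ x2, pX2 t w x2 = 1)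
    (c : X1 → X2 → ℝ) (hc : ∀ x1 x2, 0 ≤ c x1 x2) (l : S → T → W → X1 → X2 → ℝ)
    (hl0 : ∀ s t w x1 x2, 0 ≤ l s t w x1 x2)
    (hl : ∑ s, ∑ t, ∑ w, ∑ x1, ∑ x2, pW w * pX1 s w x1 * pX2 t w x2 * l s t w x1 x2 ≤ 1)
    (f : S → K) (s : S) (t : T) (k : K) :
    bookAvg pW pX1 pX2 (fun wb b1 b2 => c (b1 (s, wb k)) (b2 (t, wb k)) *
        ∑ s', ∑ t', if s' = s ∨ t' = t ∨ f s' = k then 0 else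
          l s' t' (wb (f s')) (b1 (s', wb (f s'))) (b2 (t', wb (f s'))))
      ≤ bookAvg pW pX1 pX2 (fun wb b1 b2 => c (b1 (s, wb k)) (b2 (t, wb k))) := by
  calc _ = ∑ s', ∑ t', bookAvg pW pX1 pX2 (fun wb b1 b2 => c (b1 (s, wb k)) (b2 (t, wb k)) *
        if s' = s ∨ t' = t ∨ f s' = k then 0 else
          l s' t' (wb (f s')) (b1 (s', wb (f s'))) (b2 (t', wb (f s')))) := by
          simp only [Finset.mul_sum, bookAvg_sum]
    _ = ∑ s', ∑ t', bookAvg pW pX1 pX2 (fun wb b1 b2 => c (b1 (s, wb k)) (b2 (t, wb k)) *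
        if s' = s ∨ t' = t ∨ f s' = k then 0 else
          ∑ w, ∑ x1, ∑ x2, pW w * pX1 s' w x1 * pX2 t' w x2 * l s' t' w x1 x2) := by
          refine Finset.sum_congr rfl fun s' _ => Finset.sum_congr rfl fun t' _ => ?_
          split_ifs with h
          · rfl
          · simp only [not_or] at h
            rw [bookAvg_resX2 hpX2sum t' (fun wb => wb (f s')),
              bookAvg_resX1 hpX1sum s' (fun wb => wb (f s')), bookAvg_resW hpWsum (f s')]
            congr 1; funext wb b1 b2
            simp only [Finset.mul_sum]
            refine Finset.sum_congr rfl fun w _ => Finset.sum_congr rfl fun x1 _ =>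
              Finset.sum_congr rfl fun x2 _ => ?_
            rw [Function.update_self, Function.update_self, Function.update_self,
              Function.update_of_ne (Ne.symm h.2.2),
              Function.update_of_ne (fun e => h.1 (congrArg Prod.fst e).symm),
              Function.update_of_ne (fun e => h.2.1 (congrArg Prod.fst e).symm)]
            ring
    _ = bookAvg pW pX1 pX2 (fun wb b1 b2 => c (b1 (s, wb k)) (b2 (t, wb k)) *
        ∑ s', ∑ t', if s' = s ∨ t' = t ∨ f s' = k then 0 else
          ∑ w, ∑ x1, ∑ x2, pW w * pX1 s' w x1 * pX2 t' w x2 * l s' t' w x1 x2) := by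
          simp only [Finset.mul_sum, bookAvg_sum]
    _ ≤ _ := by
          refine bookAvg_mono hpWnn hpX1nn hpX2nn fun wb b1 b2 => ?_
          refine mul_le_of_le_one_right (hc _ _) ((Finset.sum_le_sum fun s' _ =>
            Finset.sum_le_sum fun t' _ => ?_).trans hl)
          split_ifs
          · exact Finset.sum_nonneg fun w _ => Finset.sum_nonneg fun x _ =>
              Finset.sum_nonneg fun x' _ => mul_nonneg (mul_nonneg (mul_nonneg (hpWnn _)
                (hpX1nn _ _ _)) (hpX2nn _ _ _)) (hl0 _ _ _ _ _)
          · exact le_rfl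

end Book

/-! ### One-shot random coding with a threshold decoder -/

section OneShot
variable {S T K W X1 X2 Y : Type*} [Fintype S] [Fintype T] [Fintype K] [Fintype W]
  [Fintype X1] [Fintype X2] [Fintype Y]
  [DecidableEq S] [DecidableEq T] [DecidableEq K]

omit [Fintype K] [Fintype W] [Fintype X1] [Fintype X2] [Fintype Y] in
/-- If the threshold decoder, which picks any pair `z` passing the test `Q`, errs on `(s, t)`, then
either `(s, t)` fails one of the four threshold tests or a wrong pair passes the test, and the
latter is paid for by one of four sums according to which of `s`, `t`, `f s` is wrong. -/
theorem decoder_error_le {L1 L2 L4 : S → T → W → X1 → X2 → Y → ℝ}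
    {L3 : K → S → T → W → X1 → X2 → Y → ℝ} {θ : ℝ} (hθ : 0 < θ)
    {pST : S → T → ℝ} {f : S → K} {g : T → K} (hcommon : ∀ s t, pST s t ≠ 0 → f s = g t)
    (h1 : ∀ s t w x1 x2 y, 0 ≤ L1 s t w x1 x2 y) (h2 : ∀ s t w x1 x2 y, 0 ≤ L2 s t w x1 x2 y)
    (h3 : ∀ k s t w x1 x2 y, 0 ≤ L3 k s t w x1 x2 y) (h4 : ∀ s t w x1 x2 y, 0 ≤ L4 s t w x1 x2 y)
    (wb : K → W) (b1 : S × W → X1) (b2 : T × W → X2) (y : Y)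
    (Q : S × T → Prop)
    (hQ : ∀ s t, Q (s, t) ↔ pST s t ≠ 0 ∧
      θ ≤ L1 s t (wb (f s)) (b1 (s, wb (f s))) (b2 (t, wb (g t))) y ∧
      θ ≤ L2 s t (wb (f s)) (b1 (s, wb (f s))) (b2 (t, wb (g t))) y ∧
      θ ≤ L3 (f s) s t (wb (f s)) (b1 (s, wb (f s))) (b2 (t, wb (g t))) y ∧
      θ ≤ L4 s t (wb (f s)) (b1 (s, wb (f s))) (b2 (t, wb (g t))) y)
    (z : S × T) (hz : (∃ z', Q z') → Q z) (s : S) (t : T) (hst : pST s t ≠ 0) (k : K)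
    (hk : f s = k) (hne : z ≠ (s, t)) :
    1 ≤ (if L1 s t (wb k) (b1 (s, wb k)) (b2 (t, wb k)) y < θ ∨
            L2 s t (wb k) (b1 (s, wb k)) (b2 (t, wb k)) y < θ ∨
            L3 k s t (wb k) (b1 (s, wb k)) (b2 (t, wb k)) y < θ ∨
            L4 s t (wb k) (b1 (s, wb k)) (b2 (t, wb k)) y < θ then (1 : ℝ) else 0)
      + θ⁻¹ * ((∑ s', if s' = s then 0 else L1 s' t (wb k) (b1 (s', wb k)) (b2 (t, wb k)) y)
        + (∑ t', if t' = t then 0 else L2 s t' (wb k) (b1 (s, wb k)) (b2 (t', wb k)) y)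
        + (∑ s', ∑ t', if s' = s ∨ t' = t then 0 else
            L3 k s' t' (wb k) (b1 (s', wb k)) (b2 (t', wb k)) y)
        + (∑ s', ∑ t', if s' = s ∨ t' = t ∨ f s' = k then 0 else
            L4 s' t' (wb (f s')) (b1 (s', wb (f s'))) (b2 (t', wb (f s'))) y)) := by
  set A1 := ∑ s', if s' = s then 0 else L1 s' t (wb k) (b1 (s', wb k)) (b2 (t, wb k)) y with hA1
  set A2 := ∑ t', if t' = t then 0 else L2 s t' (wb k) (b1 (s, wb k)) (b2 (t', wb k)) y with hA2
  set A3 := ∑ s', ∑ t', if s' = s ∨ t' = t then 0 else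
            L3 k s' t' (wb k) (b1 (s', wb k)) (b2 (t', wb k)) y with hA3
  set A4 := ∑ s', ∑ t', if s' = s ∨ t' = t ∨ f s' = k then 0 else
            L4 s' t' (wb (f s')) (b1 (s', wb (f s'))) (b2 (t', wb (f s'))) y with hA4
  have e1 : ∀ s', 0 ≤ if s' = s then 0 else L1 s' t (wb k) (b1 (s', wb k)) (b2 (t, wb k)) y :=
    fun s' => by split_ifs; exacts [le_rfl, h1 _ _ _ _ _ _]
  have e2 : ∀ t', 0 ≤ if t' = t then 0 else L2 s t' (wb k) (b1 (s, wb k)) (b2 (t', wb k)) y :=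
    fun t' => by split_ifs; exacts [le_rfl, h2 _ _ _ _ _ _]
  have e3 : ∀ s' t', 0 ≤ if s' = s ∨ t' = t then 0 else
      L3 k s' t' (wb k) (b1 (s', wb k)) (b2 (t', wb k)) y :=
    fun s' t' => by split_ifs; exacts [le_rfl, h3 _ _ _ _ _ _ _]
  have e4 : ∀ s' t', 0 ≤ if s' = s ∨ t' = t ∨ f s' = k then 0 else
      L4 s' t' (wb (f s')) (b1 (s', wb (f s'))) (b2 (t', wb (f s'))) y :=
    fun s' t' => by split_ifs; exacts [le_rfl, h4 _ _ _ _ _ _]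
  have n1 : 0 ≤ A1 := Finset.sum_nonneg fun s' _ => e1 s'
  have n2 : 0 ≤ A2 := Finset.sum_nonneg fun t' _ => e2 t'
  have n3 : 0 ≤ A3 := Finset.sum_nonneg fun s' _ => Finset.sum_nonneg fun t' _ => e3 s' t'
  have n4 : 0 ≤ A4 := Finset.sum_nonneg fun s' _ => Finset.sum_nonneg fun t' _ => e4 s' t'
  have hgt : g t = k := by rw [← hcommon s t hst, hk]
  split_ifs with hbad
  · have : 0 ≤ θ⁻¹ * (A1 + A2 + A3 + A4) := by positivity
    linarith
  · simp only [not_or, not_lt] at hbad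
    have hQst : Q (s, t) := by
      rw [hQ, hk, hgt]
      exact ⟨hst, hbad⟩
    have hQz := hz ⟨_, hQst⟩
    obtain ⟨s', t'⟩ := z
    rw [hQ] at hQz
    obtain ⟨hp', q1, q2, q3, q4⟩ := hQz
    have hfg := hcommon s' t' hp'
    suffices hmain : θ ≤ A1 + A2 + A3 + A4 by
      rw [zero_add, inv_mul_eq_div, le_div_iff₀ hθ]
      linarith
    by_cases ht : t' = t
    · have hs : s' ≠ s := fun h => hne (by rw [h, ht])
      subst ht
      rw [hfg, hgt] at q1
      have := Finset.single_le_sum (fun s' _ => e1 s') (Finset.mem_univ s')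
      rw [if_neg hs, ← hA1] at this
      linarith
    · by_cases hs : s' = s
      · subst hs
        rw [← hfg, hk] at q2
        have := Finset.single_le_sum (fun t' _ => e2 t') (Finset.mem_univ t')
        rw [if_neg ht, ← hA2] at this
        linarith
      · by_cases hk' : f s' = k
        · rw [← hfg, hk'] at q3
          have := (Finset.single_le_sum (fun t' _ => e3 s' t') (Finset.mem_univ t')).trans
            (Finset.single_le_sum (f := fun s' => ∑ t', if s' = s ∨ t' = t then 0 else
              L3 k s' t' (wb k) (b1 (s', wb k)) (b2 (t', wb k)) y)
              (fun s' _ => Finset.sum_nonneg fun t' _ => e3 s' t') (Finset.mem_univ s'))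
          rw [if_neg (by tauto), ← hA3] at this
          linarith
        · rw [← hfg] at q4
          have := (Finset.single_le_sum (fun t' _ => e4 s' t') (Finset.mem_univ t')).trans
            (Finset.single_le_sum (f := fun s' => ∑ t', if s' = s ∨ t' = t ∨ f s' = k then 0 else
              L4 s' t' (wb (f s')) (b1 (s', wb (f s'))) (b2 (t', wb (f s'))) y)
              (fun s' _ => Finset.sum_nonneg fun t' _ => e4 s' t') (Finset.mem_univ s'))
          rw [if_neg (by tauto), ← hA4] at this
          linarith

/-- One-shot coding theorem. The functions `L1`, …, `L4` play the role of likelihood ratios for the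
four kinds of wrong pairs: each has mean at most `1` when the wrong codewords are independent of the
channel output. A random code together with the decoder testing all of them against the threshold
`θ` has error probability at most the probability that the true tuple fails a test, plus `4 / θ`. -/
theorem oneShot [Nonempty S] [Nonempty T] {pST : S → T → ℝ} (hpSTnn : ∀ s t, 0 ≤ pST s t)
    (hpSTsum : ∑ s, ∑ t, pST s t = 1)
    {f : S → K} {g : T → K} (hcommon : ∀ s t, pST s t ≠ 0 → f s = g t)
    {chan : X1 → X2 → Y → ℝ} (hchannn : ∀ x1 x2 y, 0 ≤ chan x1 x2 y)
    (hchansum : ∀ x1 x2, ∑ y, chan x1 x2 y = 1)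
    {pW : W → ℝ} (hpWnn : ∀ w, 0 ≤ pW w) (hpWsum : ∑ w, pW w = 1)
    {pX1 : S → W → X1 → ℝ} (hpX1nn : ∀ s w x1, 0 ≤ pX1 s w x1)
    (hpX1sum : ∀ s w, ∑ x1, pX1 s w x1 = 1)
    {pX2 : T → W → X2 → ℝ} (hpX2nn : ∀ t w x2, 0 ≤ pX2 t w x2)
    (hpX2sum : ∀ t w, ∑ x2, pX2 t w x2 = 1)
    {L1 L2 L4 : S → T → W → X1 → X2 → Y → ℝ} {L3 : K → S → T → W → X1 → X2 → Y → ℝ}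
    (h1 : ∀ s t w x1 x2 y, 0 ≤ L1 s t w x1 x2 y) (h2 : ∀ s t w x1 x2 y, 0 ≤ L2 s t w x1 x2 y)
    (h3 : ∀ k s t w x1 x2 y, 0 ≤ L3 k s t w x1 x2 y) (h4 : ∀ s t w x1 x2 y, 0 ≤ L4 s t w x1 x2 y)
    (m1 : ∀ t w x2 y, ∑ s, ∑ x1, pX1 s w x1 * L1 s t w x1 x2 y ≤ 1)
    (m2 : ∀ s w x1 y, ∑ t, ∑ x2, pX2 t w x2 * L2 s t w x1 x2 y ≤ 1)
    (m3 : ∀ k w y, ∑ s, ∑ t, ∑ x1, ∑ x2, pX1 s w x1 * pX2 t w x2 * L3 k s t w x1 x2 y ≤ 1)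
    (m4 : ∀ y, ∑ s, ∑ t, ∑ w, ∑ x1, ∑ x2,
      pW w * pX1 s w x1 * pX2 t w x2 * L4 s t w x1 x2 y ≤ 1)
    {θ : ℝ} (hθ : 0 < θ) :
    ∃ (f1 : S → X1) (f2 : T → X2) (φ : Y → S × T),
      ∑ s, ∑ t, ∑ y, (if φ y ≠ (s, t) then pST s t * chan (f1 s) (f2 t) y else 0) ≤
      (∑ s, ∑ t, ∑ w, ∑ x1, ∑ x2, ∑ y,
        pW w * pST s t * pX1 s w x1 * pX2 t w x2 * chan x1 x2 y *
        (if L1 s t w x1 x2 y < θ ∨ L2 s t w x1 x2 y < θ ∨ L3 (f s) s t w x1 x2 y < θ ∨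
          L4 s t w x1 x2 y < θ then 1 else 0)) + 4 / θ := by
  classical
  let Q : (K → W) → (S × W → X1) → (T × W → X2) → Y → S × T → Prop := fun wb b1 b2 y z =>
    pST z.1 z.2 ≠ 0 ∧
      θ ≤ L1 z.1 z.2 (wb (f z.1)) (b1 (z.1, wb (f z.1))) (b2 (z.2, wb (g z.2))) y ∧
      θ ≤ L2 z.1 z.2 (wb (f z.1)) (b1 (z.1, wb (f z.1))) (b2 (z.2, wb (g z.2))) y ∧
      θ ≤ L3 (f z.1) z.1 z.2 (wb (f z.1)) (b1 (z.1, wb (f z.1))) (b2 (z.2, wb (g z.2))) y ∧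
      θ ≤ L4 z.1 z.2 (wb (f z.1)) (b1 (z.1, wb (f z.1))) (b2 (z.2, wb (g z.2))) y
  have hdec : ∀ wb b1 b2 y, ∃ z, (∃ z', Q wb b1 b2 y z') → Q wb b1 b2 y z := fun wb b1 b2 y => by
    by_cases h : ∃ z', Q wb b1 b2 y z'
    · exact ⟨h.choose, fun _ => h.choose_spec⟩
    · exact ⟨Classical.arbitrary _, fun h' => absurd h' h⟩
  choose dec hdec using hdec
  let E := bookAvg (K := K) pW pX1 pX2
  let err : (K → W) → (S × W → X1) → (T × W → X2) → ℝ := fun wb b1 b2 =>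
    ∑ s, ∑ t, ∑ y, (if dec wb b1 b2 y ≠ (s, t) then
      pST s t * chan (b1 (s, wb (f s))) (b2 (t, wb (g t))) y else 0)
  obtain ⟨wb, b1, b2, hle⟩ := exists_le_bookAvg hpWnn hpX1nn hpX2nn hpWsum hpX1sum hpX2sum err
  refine ⟨fun s => b1 (s, wb (f s)), fun t => b2 (t, wb (g t)), dec wb b1 b2, hle.trans ?_⟩
  let bad : S → T → W → X1 → X2 → Y → ℝ := fun s t w x1 x2 y =>
    if L1 s t w x1 x2 y < θ ∨ L2 s t w x1 x2 y < θ ∨ L3 (f s) s t w x1 x2 y < θ ∨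
          L4 s t w x1 x2 y < θ then 1 else 0
  have hst : ∀ s t, bookAvg pW pX1 pX2 (fun wb b1 b2 => ∑ y, (if dec wb b1 b2 y ≠ (s, t) then
      pST s t * chan (b1 (s, wb (f s))) (b2 (t, wb (g t))) y else 0)) ≤
      pST s t * ((∑ w, ∑ x1, ∑ x2, pW w * pX1 s w x1 * pX2 t w x2 *
        ∑ y, chan x1 x2 y * bad s t w x1 x2 y) + 4 / θ) := by
    intro s t
    -- only pairs of positive probability have a well-defined common part
    by_cases h0 : pST s t = 0
    · simp [h0, bookAvg_const hpWsum hpX1sum hpX2sum]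
    have hk := hcommon s t h0
    rw [← hk]
    let A : Y → ℝ := fun y =>
      bookAvg pW pX1 pX2 (fun wb b1 b2 => chan (b1 (s, wb (f s))) (b2 (t, wb (f s))) y)
    have hA : ∑ y, A y = 1 := by
      rw [← bookAvg_sum]
      simp only [hchansum]
      exact bookAvg_const hpWsum hpX1sum hpX2sum 1
    have hpt : ∀ wb b1 b2, (∑ y, (if dec wb b1 b2 y ≠ (s, t) then
        pST s t * chan (b1 (s, wb (f s))) (b2 (t, wb (f s))) y else 0)) ≤
        pST s t * ((∑ y, chan (b1 (s, wb (f s))) (b2 (t, wb (f s))) y *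
            bad s t (wb (f s)) (b1 (s, wb (f s))) (b2 (t, wb (f s))) y)
          + θ⁻¹ * (∑ y, (chan (b1 (s, wb (f s))) (b2 (t, wb (f s))) y *
            (∑ s', if s' = s then 0 else
              L1 s' t (wb (f s)) (b1 (s', wb (f s))) (b2 (t, wb (f s))) y)
          + chan (b1 (s, wb (f s))) (b2 (t, wb (f s))) y *
            (∑ t', if t' = t then 0 else
              L2 s t' (wb (f s)) (b1 (s, wb (f s))) (b2 (t', wb (f s))) y)
          + chan (b1 (s, wb (f s))) (b2 (t, wb (f s))) y *
            (∑ s', ∑ t', if s' = s ∨ t' = t then 0 else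
              L3 (f s) s' t' (wb (f s)) (b1 (s', wb (f s))) (b2 (t', wb (f s))) y)
          + chan (b1 (s, wb (f s))) (b2 (t, wb (f s))) y *
            (∑ s', ∑ t', if s' = s ∨ t' = t ∨ f s' = f s then 0 else
              L4 s' t' (wb (f s')) (b1 (s', wb (f s'))) (b2 (t', wb (f s'))) y)))) := by
      intro wb b1 b2
      rw [Finset.mul_sum, ← Finset.sum_add_distrib, Finset.mul_sum]
      refine Finset.sum_le_sum fun y _ => ?_
      have hc := hchannn (b1 (s, wb (f s))) (b2 (t, wb (f s))) y
      have hp := hpSTnn s t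
      rw [← mul_add, ← mul_add, ← mul_add, ← mul_left_comm, ← mul_add, ← mul_assoc]
      split_ifs with hd
      · exact le_mul_of_one_le_right (mul_nonneg hp hc)
          (decoder_error_le hθ hcommon h1 h2 h3 h4 wb b1 b2 y (Q wb b1 b2 y) (fun _ _ => Iff.rfl)
            (dec wb b1 b2 y) (hdec wb b1 b2 y) s t h0 (f s) rfl hd)
      · refine mul_nonneg (mul_nonneg hp hc) (add_nonneg ?_ (mul_nonneg (inv_nonneg.2 hθ.le)
          (add_nonneg (add_nonneg (add_nonneg ?_ ?_) ?_) ?_)))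
        · simp only [bad]; split_ifs <;> norm_num
        · exact Finset.sum_nonneg fun s' _ => by split_ifs; exacts [le_rfl, h1 _ _ _ _ _ _]
        · exact Finset.sum_nonneg fun s' _ => by split_ifs; exacts [le_rfl, h2 _ _ _ _ _ _]
        · exact Finset.sum_nonneg fun s' _ => Finset.sum_nonneg fun t' _ => by
            split_ifs; exacts [le_rfl, h3 _ _ _ _ _ _ _]
        · exact Finset.sum_nonneg fun s' _ => Finset.sum_nonneg fun t' _ => by
            split_ifs; exacts [le_rfl, h4 _ _ _ _ _ _]
    refine (bookAvg_mono hpWnn hpX1nn hpX2nn hpt).trans ?_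
    rw [bookAvg_mul_left]
    refine mul_le_mul_of_nonneg_left ?_ (hpSTnn s t)
    rw [bookAvg_add, bookAvg_mul_left, bookAvg_sum Finset.univ
      (fun y wb b1 b2 => (chan (b1 (s, wb (f s))) (b2 (t, wb (f s))) y *
            (∑ s', if s' = s then 0 else
              L1 s' t (wb (f s)) (b1 (s', wb (f s))) (b2 (t, wb (f s))) y)
          + chan (b1 (s, wb (f s))) (b2 (t, wb (f s))) y *
            (∑ t', if t' = t then 0 else
              L2 s t' (wb (f s)) (b1 (s, wb (f s))) (b2 (t', wb (f s))) y)
          + chan (b1 (s, wb (f s))) (b2 (t, wb (f s))) y *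
            (∑ s', ∑ t', if s' = s ∨ t' = t then 0 else
              L3 (f s) s' t' (wb (f s)) (b1 (s', wb (f s))) (b2 (t', wb (f s))) y)
          + chan (b1 (s, wb (f s))) (b2 (t, wb (f s))) y *
            (∑ s', ∑ t', if s' = s ∨ t' = t ∨ f s' = f s then 0 else
              L4 s' t' (wb (f s')) (b1 (s', wb (f s'))) (b2 (t', wb (f s'))) y)))]
    refine add_le_add (le_of_eq ?_) ?_
    · exact bookAvg_word hpWsum hpX1sum hpX2sum s t (f s)
        (fun w x1 x2 => ∑ y, chan x1 x2 y * bad s t w x1 x2 y)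
    · have hy : ∀ y, _ ≤ A y + A y + A y + A y := fun y =>
        add_le_add (add_le_add (add_le_add
          (bookAvg_wrong1 hpWnn hpX1nn hpX2nn hpX1sum (fun x1 x2 => chan x1 x2 y)
            (fun _ _ => hchannn _ _ _) (fun s' w x1 x2 => L1 s' t w x1 x2 y)
            (fun _ _ _ _ => h1 _ _ _ _ _ _) (fun w x2 => m1 t w x2 y) s t (f s))
          (bookAvg_wrong2 hpWnn hpX1nn hpX2nn hpX2sum (fun x1 x2 => chan x1 x2 y)
            (fun _ _ => hchannn _ _ _) (fun t' w x1 x2 => L2 s t' w x1 x2 y)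
            (fun _ _ _ _ => h2 _ _ _ _ _ _) (fun w x1 => m2 s w x1 y) s t (f s)))
          (bookAvg_wrong3 hpWnn hpX1nn hpX2nn hpX1sum hpX2sum (fun x1 x2 => chan x1 x2 y)
            (fun _ _ => hchannn _ _ _) (fun s' t' w x1 x2 => L3 (f s) s' t' w x1 x2 y)
            (fun _ _ _ _ _ => h3 _ _ _ _ _ _ _) (fun w => m3 (f s) w y) s t (f s)))
          (bookAvg_wrong4 hpWnn hpX1nn hpX2nn hpWsum hpX1sum hpX2sum (fun x1 x2 => chan x1 x2 y)
            (fun _ _ => hchannn _ _ _) (fun s' t' w x1 x2 => L4 s' t' w x1 x2 y)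
            (fun _ _ _ _ _ => h4 _ _ _ _ _ _) (m4 y) f s t (f s))
      have hsum := Finset.sum_le_sum fun y (_ : y ∈ Finset.univ) => hy y
      simp only [← bookAvg_add] at hsum
      rw [Finset.sum_add_distrib, Finset.sum_add_distrib, Finset.sum_add_distrib, hA] at hsum
      rw [inv_mul_eq_div]
      exact div_le_div_of_nonneg_right (hsum.trans (by norm_num)) hθ.le
  calc bookAvg pW pX1 pX2 err
      = ∑ s, ∑ t, bookAvg pW pX1 pX2 (fun wb b1 b2 => ∑ y, (if dec wb b1 b2 y ≠ (s, t) then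
        pST s t * chan (b1 (s, wb (f s))) (b2 (t, wb (g t))) y else 0)) := by
        simp only [err, bookAvg_sum]
    _ ≤ ∑ s, ∑ t, pST s t * ((∑ w, ∑ x1, ∑ x2, pW w * pX1 s w x1 * pX2 t w x2 *
        ∑ y, chan x1 x2 y * bad s t w x1 x2 y) + 4 / θ) :=
        Finset.sum_le_sum fun s _ => Finset.sum_le_sum fun t _ => hst s t
    _ = _ := by
        simp only [mul_add, Finset.sum_add_distrib]
        congr 1
        · simp only [Finset.mul_sum]
          refine Finset.sum_congr rfl fun s _ => Finset.sum_congr rfl fun t _ =>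
            Finset.sum_congr rfl fun w _ => Finset.sum_congr rfl fun x1 _ =>
            Finset.sum_congr rfl fun x2 _ => Finset.sum_congr rfl fun y _ => ?_
          simp only [bad]; ring
        · simp only [← Finset.sum_mul, hpSTsum, one_mul]

end OneShot

/-! ### Memoryless extensions and Chernoff's bound -/

section Product
variable {ι A B C D F : Type*} [Fintype ι] [DecidableEq ι] [Fintype A] [Fintype B] [Fintype C]
  [Fintype D] [Fintype F]

theorem sum_fun_prod {R : (ι → A) → (ι → B) → ℝ} :
    ∑ a, ∑ b, R a b = ∑ z : ι → A × B, R (fun i => (z i).1) (fun i => (z i).2) := by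
  rw [← Fintype.sum_prod_type',
    ← (Equiv.arrowProdEquivProdArrow ι (fun _ => A) (fun _ => B)).sum_comp]
  rfl

theorem sum_prod1 (h : ι → A → ℝ) : ∑ a : ι → A, ∏ i, h i (a i) = ∏ i, ∑ a, h i a := by
  rw [Finset.prod_univ_sum, Fintype.piFinset_univ]

theorem sum_prod2 (h : ι → A → B → ℝ) :
    ∑ a : ι → A, ∑ b : ι → B, ∏ i, h i (a i) (b i) = ∏ i, ∑ a, ∑ b, h i a b := by
  rw [← sum_prod1]
  exact Finset.sum_congr rfl fun a _ => sum_prod1 fun i b => h i (a i) b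

theorem sum_prod4 (h : ι → A → B → C → D → ℝ) :
    ∑ a : ι → A, ∑ b : ι → B, ∑ c : ι → C, ∑ d : ι → D, ∏ i, h i (a i) (b i) (c i) (d i)
      = ∏ i, ∑ a, ∑ b, ∑ c, ∑ d, h i a b c d := by
  rw [← sum_prod2]
  exact Finset.sum_congr rfl fun a _ => Finset.sum_congr rfl fun b _ =>
    sum_prod2 fun i c d => h i (a i) (b i) c d

theorem sum_prod5 (h : ι → A → B → C → D → F → ℝ) :
    ∑ a : ι → A, ∑ b : ι → B, ∑ c : ι → C, ∑ d : ι → D, ∑ e : ι → F,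
      ∏ i, h i (a i) (b i) (c i) (d i) (e i) = ∏ i, ∑ a, ∑ b, ∑ c, ∑ d, ∑ e, h i a b c d e := by
  rw [← sum_prod1]
  exact Finset.sum_congr rfl fun a _ => sum_prod4 fun i => h i (a i)

/-- Chernoff's bound: a product of i.i.d. factors `L` with `E (log L) > d` falls below `exp (n d)`
with exponentially small probability. -/
theorem chernoff {p L : A → ℝ} (hp : ∀ a, 0 ≤ p a) (hsum : ∑ a, p a = 1)
    (hL : ∀ a, p a ≠ 0 → 0 < L a) {d : ℝ} (hd : d < ∑ a, p a * Real.log (L a)) :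
    ∃ r : ℝ, 0 ≤ r ∧ r < 1 ∧ ∀ n : ℕ, ∑ ω : Fin n → A, (∏ i, p (ω i)) *
      (if ∏ i, L (ω i) < Real.exp (n * d) then 1 else 0) ≤ r ^ n := by
  -- the moment generating function of `d - log L`: since `m 0 = 1` and `m' 0 < 0`, some `l > 0` has
  -- `m l < 1`
  let m : ℝ → ℝ := fun l => ∑ a, p a * Real.exp (l * (d - Real.log (L a)))
  have hm0 : m 0 = 1 := by simp [m, hsum]
  have hder : HasDerivAt m (∑ a, p a * (d - Real.log (L a))) 0 := by
    refine HasDerivAt.fun_sum fun a _ => HasDerivAt.const_mul _ ?_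
    have := ((hasDerivAt_id (0 : ℝ)).mul_const (d - Real.log (L a))).exp
    simpa using this
  have hneg : ∑ a, p a * (d - Real.log (L a)) < 0 := by
    simp only [mul_sub, Finset.sum_sub_distrib, ← Finset.sum_mul, hsum]
    linarith
  obtain ⟨l, hl, hl0⟩ := ((hder.tendsto_slope_zero_right.eventually_lt_const hneg).and
    self_mem_nhdsWithin).exists
  have hl0 : 0 < l := hl0
  simp only [zero_add, hm0, smul_eq_mul] at hl
  have hml : m l < 1 := by
    by_contra hc
    have : 0 ≤ l⁻¹ * (m l - 1) := mul_nonneg (inv_nonneg.2 hl0.le) (by linarith)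
    linarith
  refine ⟨m l, Finset.sum_nonneg fun a _ => mul_nonneg (hp a) (Real.exp_pos _).le, hml,
    fun n => ?_⟩
  have hpow : m l ^ n = ∑ ω : Fin n → A, ∏ i, p (ω i) * Real.exp (l * (d - Real.log (L (ω i)))) := by
    rw [sum_prod1 (fun (_ : Fin n) a => p a * Real.exp (l * (d - Real.log (L a))))]
    simp [m]
  rw [hpow]
  refine Finset.sum_le_sum fun ω _ => ?_
  rw [Finset.prod_mul_distrib]
  by_cases h0 : ∏ i, p (ω i) = 0
  · simp [h0]
  refine mul_le_mul_of_nonneg_left ?_ (Finset.prod_nonneg fun i _ => hp _)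
  split_ifs with hlt
  · rw [← Real.exp_sum, ← Finset.mul_sum]
    refine Real.one_le_exp (mul_nonneg hl0.le ?_)
    have hpos : ∀ i, 0 < L (ω i) := fun i => hL _ (Finset.prod_ne_zero_iff.1 h0 i (Finset.mem_univ i))
    have := (Real.log_lt_iff_lt_exp (Finset.prod_pos fun i _ => hpos i)).2 hlt
    rw [Real.log_prod (fun i _ => (hpos i).ne')] at this
    simp only [Finset.sum_sub_distrib, Finset.sum_const, Finset.card_univ, Fintype.card_fin,
      nsmul_eq_mul]
    linarith
  · exact Finset.prod_nonneg fun i _ => (Real.exp_pos _).le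

end Product

/-! ### From one letter to `n` letters -/

section Asymptotic
variable {S T K W X1 X2 Y : Type*} [Fintype S] [Fintype T] [Fintype K] [Fintype W]
  [Fintype X1] [Fintype X2] [Fintype Y]
  [DecidableEq S] [DecidableEq T] [DecidableEq K] [DecidableEq W]

omit [DecidableEq S] [DecidableEq T] [DecidableEq K] [DecidableEq W] in
theorem sum_omega6 {n : ℕ} (R : (Fin n → S) → (Fin n → T) → (Fin n → W) → (Fin n → X1) →
    (Fin n → X2) → (Fin n → Y) → ℝ) :
    ∑ s, ∑ t, ∑ w, ∑ x1, ∑ x2, ∑ y, R s t w x1 x2 y =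
      ∑ ω : Fin n → Omega6 S T W X1 X2 Y, R (fun i => mS (ω i)) (fun i => mT (ω i))
        (fun i => mW (ω i)) (fun i => mX1 (ω i)) (fun i => mX2 (ω i)) (fun i => mY (ω i)) := by
  simp only [sum_fun_prod]
  rfl

omit [DecidableEq W] in
/-- The one-shot theorem applied to `n` independent letters: it is enough to find four one-letter
likelihood ratios of mean at most `1` under independence and of positive expected logarithm. Here
`l1`, …, `l4` are `L1`, …, `L4` evaluated at the true variables; `L3` also takes the common part as
an argument, because `m3` sums over all pairs `(s, t)` with the common part held fixed. -/
theorem sendable_of_ratios {pST : S → T → ℝ} (hpSTnn : ∀ s t, 0 ≤ pST s t)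
    (hpSTsum : ∑ s, ∑ t, pST s t = 1)
    {f : S → K} {g : T → K} (hcommon : ∀ s t, pST s t ≠ 0 → f s = g t)
    {chan : X1 → X2 → Y → ℝ} (hchannn : ∀ x1 x2 y, 0 ≤ chan x1 x2 y)
    (hchansum : ∀ x1 x2, ∑ y, chan x1 x2 y = 1)
    {pW : W → ℝ} (hpWnn : ∀ w, 0 ≤ pW w) (hpWsum : ∑ w, pW w = 1)
    {pX1 : S → W → X1 → ℝ} (hpX1nn : ∀ s w x1, 0 ≤ pX1 s w x1)
    (hpX1sum : ∀ s w, ∑ x1, pX1 s w x1 = 1)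
    {pX2 : T → W → X2 → ℝ} (hpX2nn : ∀ t w x2, 0 ≤ pX2 t w x2)
    (hpX2sum : ∀ t w, ∑ x2, pX2 t w x2 = 1)
    {p : Omega6 S T W X1 X2 Y → ℝ}
    (hp : ∀ s t w x1 x2 y, p (s, t, w, x1, x2, y) =
        pW w * pST s t * pX1 s w x1 * pX2 t w x2 * chan x1 x2 y)
    (hp0 : ∀ ω, 0 ≤ p ω) (hp1 : ∑ ω, p ω = 1)
    {L1 L2 L4 : S → T → W → X1 → X2 → Y → ℝ} {L3 : K → S → T → W → X1 → X2 → Y → ℝ}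
    (h1 : ∀ s t w x1 x2 y, 0 ≤ L1 s t w x1 x2 y) (h2 : ∀ s t w x1 x2 y, 0 ≤ L2 s t w x1 x2 y)
    (h3 : ∀ k s t w x1 x2 y, 0 ≤ L3 k s t w x1 x2 y) (h4 : ∀ s t w x1 x2 y, 0 ≤ L4 s t w x1 x2 y)
    (m1 : ∀ t w x2 y, ∑ s, ∑ x1, pX1 s w x1 * L1 s t w x1 x2 y ≤ 1)
    (m2 : ∀ s w x1 y, ∑ t, ∑ x2, pX2 t w x2 * L2 s t w x1 x2 y ≤ 1)
    (m3 : ∀ k w y, ∑ s, ∑ t, ∑ x1, ∑ x2, pX1 s w x1 * pX2 t w x2 * L3 k s t w x1 x2 y ≤ 1)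
    (m4 : ∀ y, ∑ s, ∑ t, ∑ w, ∑ x1, ∑ x2,
      pW w * pX1 s w x1 * pX2 t w x2 * L4 s t w x1 x2 y ≤ 1)
    (l1 l2 l3 l4 : Omega6 S T W X1 X2 Y → ℝ)
    (e1 : ∀ s t w x1 x2 y, l1 (s, t, w, x1, x2, y) = L1 s t w x1 x2 y)
    (e2 : ∀ s t w x1 x2 y, l2 (s, t, w, x1, x2, y) = L2 s t w x1 x2 y)
    (e3 : ∀ s t w x1 x2 y, l3 (s, t, w, x1, x2, y) = L3 (f s) s t w x1 x2 y)
    (e4 : ∀ s t w x1 x2 y, l4 (s, t, w, x1, x2, y) = L4 s t w x1 x2 y)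
    (p1 : ∀ ω, p ω ≠ 0 → 0 < l1 ω) (p2 : ∀ ω, p ω ≠ 0 → 0 < l2 ω)
    (p3 : ∀ ω, p ω ≠ 0 → 0 < l3 ω) (p4 : ∀ ω, p ω ≠ 0 → 0 < l4 ω)
    (d1 : 0 < ∑ ω, p ω * Real.log (l1 ω)) (d2 : 0 < ∑ ω, p ω * Real.log (l2 ω))
    (d3 : 0 < ∑ ω, p ω * Real.log (l3 ω)) (d4 : 0 < ∑ ω, p ω * Real.log (l4 ω)) :
    MACSendable pST chan := by
  -- a single rate `d` below all four expected logarithms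
  obtain ⟨d, hd0, hd⟩ : ∃ d : ℝ, 0 < d ∧ d < min (min (∑ ω, p ω * Real.log (l1 ω))
      (∑ ω, p ω * Real.log (l2 ω))) (min (∑ ω, p ω * Real.log (l3 ω))
      (∑ ω, p ω * Real.log (l4 ω))) := exists_between (lt_min (lt_min d1 d2) (lt_min d3 d4))
  simp only [lt_min_iff] at hd
  obtain ⟨⟨hd1, hd2⟩, hd3, hd4⟩ := hd
  obtain ⟨r1, hr1, hr1', c1⟩ := chernoff hp0 hp1 p1 hd1
  obtain ⟨r2, hr2, hr2', c2⟩ := chernoff hp0 hp1 p2 hd2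
  obtain ⟨r3, hr3, hr3', c3⟩ := chernoff hp0 hp1 p3 hd3
  obtain ⟨r4, hr4, hr4', c4⟩ := chernoff hp0 hp1 p4 hd4
  have hlim : Filter.Tendsto (fun n : ℕ => (r1 ^ n + r2 ^ n + r3 ^ n + r4 ^ n)
      + 4 * (Real.exp (-d)) ^ n) Filter.atTop (nhds 0) := by
    have t := fun (r : ℝ) h0 h1 => tendsto_pow_atTop_nhds_zero_of_lt_one (r := r) h0 h1
    have := ((((t r1 hr1 hr1').add (t r2 hr2 hr2')).add (t r3 hr3 hr3')).add (t r4 hr4 hr4')).add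
      ((t (Real.exp (-d)) (Real.exp_pos _).le (by simpa using hd0)).const_mul 4)
    simpa using this
  have hneS : Nonempty S := by
    by_contra h
    rw [not_nonempty_iff] at h
    simp at hpSTsum
  have hneT : Nonempty T := by
    by_contra h
    rw [not_nonempty_iff] at h
    simp at hpSTsum
  intro ε hε
  obtain ⟨N, hN⟩ := Filter.eventually_atTop.1 (hlim.eventually_lt_const hε)
  refine ⟨N, fun n hn => ?_⟩
  have hle1 : ∀ h : Fin n → ℝ, (∀ i, 0 ≤ h i) → (∀ i, h i ≤ 1) → ∏ i, h i ≤ 1 :=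
    fun h h0 h1 => Finset.prod_le_one (fun i _ => h0 i) fun i _ => h1 i
  obtain ⟨f1, f2, φ, hφ⟩ := oneShot (S := Fin n → S) (T := Fin n → T) (K := Fin n → K)
    (W := Fin n → W) (X1 := Fin n → X1) (X2 := Fin n → X2) (Y := Fin n → Y)
    (pST := fun s t => ∏ i, pST (s i) (t i))
    (f := fun s i => f (s i)) (g := fun t i => g (t i))
    (chan := fun x1 x2 y => ∏ i, chan (x1 i) (x2 i) (y i))
    (pW := fun w => ∏ i, pW (w i))
    (pX1 := fun s w x1 => ∏ i, pX1 (s i) (w i) (x1 i))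
    (pX2 := fun t w x2 => ∏ i, pX2 (t i) (w i) (x2 i))
    (L1 := fun s t w x1 x2 y => ∏ i, L1 (s i) (t i) (w i) (x1 i) (x2 i) (y i))
    (L2 := fun s t w x1 x2 y => ∏ i, L2 (s i) (t i) (w i) (x1 i) (x2 i) (y i))
    (L3 := fun k s t w x1 x2 y => ∏ i, L3 (k i) (s i) (t i) (w i) (x1 i) (x2 i) (y i))
    (L4 := fun s t w x1 x2 y => ∏ i, L4 (s i) (t i) (w i) (x1 i) (x2 i) (y i))
    (θ := Real.exp (n * d))
    (fun s t => Finset.prod_nonneg fun i _ => hpSTnn _ _)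
    (by rw [sum_prod2 (fun (_ : Fin n) s t => pST s t)]; simp [hpSTsum])
    (fun s t h => funext fun i => hcommon _ _ (Finset.prod_ne_zero_iff.1 h i (Finset.mem_univ i)))
    (fun _ _ _ => Finset.prod_nonneg fun i _ => hchannn _ _ _)
    (fun x1 x2 => by rw [sum_prod1 (fun i y => chan (x1 i) (x2 i) y)]; simp [hchansum])
    (fun _ => Finset.prod_nonneg fun i _ => hpWnn _)
    (by rw [sum_prod1 (fun _ w => pW w)]; simp [hpWsum])
    (fun _ _ _ => Finset.prod_nonneg fun i _ => hpX1nn _ _ _)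
    (fun s w => by rw [sum_prod1 (fun i x => pX1 (s i) (w i) x)]; simp [hpX1sum])
    (fun _ _ _ => Finset.prod_nonneg fun i _ => hpX2nn _ _ _)
    (fun s w => by rw [sum_prod1 (fun i x => pX2 (s i) (w i) x)]; simp [hpX2sum])
    (fun _ _ _ _ _ _ => Finset.prod_nonneg fun i _ => h1 _ _ _ _ _ _)
    (fun _ _ _ _ _ _ => Finset.prod_nonneg fun i _ => h2 _ _ _ _ _ _)
    (fun _ _ _ _ _ _ _ => Finset.prod_nonneg fun i _ => h3 _ _ _ _ _ _ _)
    (fun _ _ _ _ _ _ => Finset.prod_nonneg fun i _ => h4 _ _ _ _ _ _)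
    (fun t w x2 y => by
      simp only [← Finset.prod_mul_distrib]
      rw [sum_prod2 (fun i s x1 => pX1 s (w i) x1 * L1 s (t i) (w i) x1 (x2 i) (y i))]
      refine hle1 _ (fun i => ?_) fun i => m1 _ _ _ _
      exact Finset.sum_nonneg fun _ _ => Finset.sum_nonneg fun _ _ =>
        mul_nonneg (hpX1nn _ _ _) (h1 _ _ _ _ _ _))
    (fun s w x1 y => by
      simp only [← Finset.prod_mul_distrib]
      rw [sum_prod2 (fun i t x2 => pX2 t (w i) x2 * L2 (s i) t (w i) (x1 i) x2 (y i))]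
      refine hle1 _ (fun i => ?_) fun i => m2 _ _ _ _
      exact Finset.sum_nonneg fun _ _ => Finset.sum_nonneg fun _ _ =>
        mul_nonneg (hpX2nn _ _ _) (h2 _ _ _ _ _ _))
    (fun k w y => by
      simp only [← Finset.prod_mul_distrib]
      rw [sum_prod4 (fun i s t x1 x2 => pX1 s (w i) x1 * pX2 t (w i) x2 *
        L3 (k i) s t (w i) x1 x2 (y i))]
      refine hle1 _ (fun i => ?_) fun i => m3 _ _ _
      exact Finset.sum_nonneg fun _ _ => Finset.sum_nonneg fun _ _ =>
        Finset.sum_nonneg fun _ _ => Finset.sum_nonneg fun _ _ =>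
        mul_nonneg (mul_nonneg (hpX1nn _ _ _) (hpX2nn _ _ _)) (h3 _ _ _ _ _ _ _))
    (fun y => by
      simp only [← Finset.prod_mul_distrib]
      rw [sum_prod5 (fun i s t w x1 x2 => pW w * pX1 s w x1 * pX2 t w x2 *
        L4 s t w x1 x2 (y i))]
      refine hle1 _ (fun i => ?_) fun i => m4 _
      exact Finset.sum_nonneg fun _ _ => Finset.sum_nonneg fun _ _ =>
        Finset.sum_nonneg fun _ _ => Finset.sum_nonneg fun _ _ => Finset.sum_nonneg fun _ _ =>
        mul_nonneg (mul_nonneg (mul_nonneg (hpWnn _) (hpX1nn _ _ _)) (hpX2nn _ _ _))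
          (h4 _ _ _ _ _ _))
    (Real.exp_pos _)
  refine ⟨f1, f2, φ, le_trans hφ (le_trans ?_ (hN n hn).le)⟩
  refine add_le_add ?_ (le_of_eq ?_)
  · rw [sum_omega6]
    refine le_trans ?_ (add_le_add (add_le_add (add_le_add (c1 n) (c2 n)) (c3 n)) (c4 n))
    simp only [← Finset.sum_add_distrib, ← mul_add]
    refine Finset.sum_le_sum fun ω _ => ?_
    have hω : ∀ i, p (ω i) = pW (mW (ω i)) * pST (mS (ω i)) (mT (ω i)) *
        pX1 (mS (ω i)) (mW (ω i)) (mX1 (ω i)) * pX2 (mT (ω i)) (mW (ω i)) (mX2 (ω i)) *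
        chan (mX1 (ω i)) (mX2 (ω i)) (mY (ω i)) := fun i => hp _ _ _ _ _ _
    have hω1 : ∀ i, l1 (ω i) = _ := fun i => e1 (mS (ω i)) (mT (ω i)) (mW (ω i)) (mX1 (ω i))
      (mX2 (ω i)) (mY (ω i))
    have hω2 : ∀ i, l2 (ω i) = _ := fun i => e2 (mS (ω i)) (mT (ω i)) (mW (ω i)) (mX1 (ω i))
      (mX2 (ω i)) (mY (ω i))
    have hω3 : ∀ i, l3 (ω i) = _ := fun i => e3 (mS (ω i)) (mT (ω i)) (mW (ω i)) (mX1 (ω i))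
      (mX2 (ω i)) (mY (ω i))
    have hω4 : ∀ i, l4 (ω i) = _ := fun i => e4 (mS (ω i)) (mT (ω i)) (mW (ω i)) (mX1 (ω i))
      (mX2 (ω i)) (mY (ω i))
    simp only [← Finset.prod_mul_distrib, hω, hω1, hω2, hω3, hω4]
    refine mul_le_mul_of_nonneg_left ?_ (Finset.prod_nonneg fun i _ => hω i ▸ hp0 (ω i))
    -- union bound over the four tests
    have hu : ∀ (P1 P2 P3 P4 : Prop) [Decidable P1] [Decidable P2] [Decidable P3] [Decidable P4],
        (if P1 ∨ P2 ∨ P3 ∨ P4 then (1 : ℝ) else 0) ≤ (if P1 then 1 else 0) + (if P2 then 1 else 0)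
          + (if P3 then 1 else 0) + (if P4 then 1 else 0) := by
      intro P1 P2 P3 P4 _ _ _ _
      by_cases P1 <;> by_cases P2 <;> by_cases P3 <;> by_cases P4 <;>
        (simp [*]; try norm_num)
    exact hu _ _ _ _
  · rw [← Real.exp_nat_mul, div_eq_mul_inv, ← Real.exp_neg]
    ring_nf

end Asymptotic

/-! ### Entropies as expected logarithms of marginals -/

section Marginal
variable {Ω α β γ : Type*} [Fintype Ω] [Fintype α] [Fintype β] [Fintype γ]
  [DecidableEq α] [DecidableEq β] [DecidableEq γ]

/-- The pmf of `f` under the pmf `p`. -/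
noncomputable def marg {Ω α : Type*} [Fintype Ω] [DecidableEq α] (p : Ω → ℝ) (f : Ω → α)
    (a : α) : ℝ :=
  ∑ ω, if f ω = a then p ω else 0

omit [Fintype α] in
theorem marg_nonneg {p : Ω → ℝ} (hp : ∀ ω, 0 ≤ p ω) (f : Ω → α) (a : α) : 0 ≤ marg p f a :=
  Finset.sum_nonneg fun ω _ => by split_ifs; exacts [hp ω, le_rfl]

omit [Fintype α] in
theorem marg_pos {p : Ω → ℝ} (hp : ∀ ω, 0 ≤ p ω) (f : Ω → α) {ω : Ω} (h : p ω ≠ 0) :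
    0 < marg p f (f ω) := by
  refine lt_of_lt_of_le ((hp ω).lt_of_ne' h) ?_
  have := Finset.single_le_sum (f := fun ω' => if f ω' = f ω then p ω' else 0)
    (fun ω' _ => by split_ifs; exacts [hp ω', le_rfl]) (Finset.mem_univ ω)
  simpa [marg] using this

omit [Fintype β] in
theorem marg_sum_fst (p : Ω → ℝ) (f : Ω → α) (g : Ω → β) (b : β) :
    ∑ a, marg p (fun ω => (f ω, g ω)) (a, b) = marg p g b := by
  unfold marg
  rw [Finset.sum_comm]
  refine Finset.sum_congr rfl fun ω _ => ?_
  simp [Prod.mk.injEq, ite_and]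

/-- Entropy is the expectation of the negative logarithm of the pmf. -/
theorem margEnt_mul_log (p : Ω → ℝ) (f : Ω → α) :
    margEnt p f * Real.log 2 = -∑ ω, p ω * Real.log (marg p f (f ω)) := by
  have hl : Real.log 2 ≠ 0 := (Real.log_pos one_lt_two).ne'
  have h : ∀ a, marg p f a * Real.log (marg p f a) =
      ∑ ω, if f ω = a then p ω * Real.log (marg p f (f ω)) else 0 := by
    intro a
    conv_lhs => rw [marg, Finset.sum_mul]
    refine Finset.sum_congr rfl fun ω _ => ?_
    split_ifs with h
    · rw [h]; rfl
    · simp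
  calc margEnt p f * Real.log 2 = -∑ a, marg p f a * Real.log (marg p f a) := by
        rw [margEnt, Finset.sum_mul, ← Finset.sum_neg_distrib]
        refine Finset.sum_congr rfl fun a _ => ?_
        change -(marg p f a * (Real.log (marg p f a) / Real.log 2)) * Real.log 2 = _
        field_simp
    _ = _ := by
        simp only [h]
        rw [Finset.sum_comm]
        simp

/-- The likelihood ratio whose expected logarithm is `I(f; g | h) - H(a | b)`. -/
noncomputable def cratio {δ ε : Type*} [DecidableEq δ] [DecidableEq ε] (p : Ω → ℝ)
    (a : Ω → δ) (b : Ω → ε) (f : Ω → α) (g : Ω → β) (h : Ω → γ)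
    (va : δ) (vb : ε) (vf : α) (vg : β) (vh : γ) : ℝ :=
  marg p (fun ω => (a ω, b ω)) (va, vb) / marg p b vb *
    (marg p (fun ω => (f ω, g ω, h ω)) (vf, vg, vh) * marg p h vh /
      (marg p (fun ω => (f ω, h ω)) (vf, vh) * marg p (fun ω => (g ω, h ω)) (vg, vh)))

section
variable {δ ε : Type*} [Fintype δ] [Fintype ε] [DecidableEq δ] [DecidableEq ε]
  {p : Ω → ℝ} (hp : ∀ ω, 0 ≤ p ω)
  (a : Ω → δ) (b : Ω → ε) (f : Ω → α) (g : Ω → β) (h : Ω → γ)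
include hp

omit [Fintype α] [Fintype β] [Fintype γ] [Fintype δ] [Fintype ε] in
theorem cratio_nonneg (va : δ) (vb : ε) (vf : α) (vg : β) (vh : γ) :
    0 ≤ cratio p a b f g h va vb vf vg vh := by
  unfold cratio
  exact mul_nonneg (div_nonneg (marg_nonneg hp _ _) (marg_nonneg hp _ _))
    (div_nonneg (mul_nonneg (marg_nonneg hp _ _) (marg_nonneg hp _ _))
      (mul_nonneg (marg_nonneg hp _ _) (marg_nonneg hp _ _)))

omit [Fintype α] [Fintype β] [Fintype γ] [Fintype δ] [Fintype ε] in
theorem cratio_pos {ω : Ω} (hω : p ω ≠ 0) : 0 < cratio p a b f g h (a ω) (b ω) (f ω) (g ω) (h ω) :=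
  mul_pos (div_pos (marg_pos hp (fun ω => (a ω, b ω)) hω) (marg_pos hp b hω))
    (div_pos (mul_pos (marg_pos hp (fun ω => (f ω, g ω, h ω)) hω) (marg_pos hp h hω))
      (mul_pos (marg_pos hp (fun ω => (f ω, h ω)) hω) (marg_pos hp (fun ω => (g ω, h ω)) hω)))

theorem sum_log_cratio :
    ∑ ω, p ω * Real.log (cratio p a b f g h (a ω) (b ω) (f ω) (g ω) (h ω))
      = (cmi p f g h - condEnt p a b) * Real.log 2 := by
  have e : ∀ ω, p ω * Real.log (cratio p a b f g h (a ω) (b ω) (f ω) (g ω) (h ω)) =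
      p ω * Real.log (marg p (fun ω => (a ω, b ω)) (a ω, b ω)) - p ω * Real.log (marg p b (b ω))
      + p ω * Real.log (marg p (fun ω => (f ω, g ω, h ω)) (f ω, g ω, h ω))
      + p ω * Real.log (marg p h (h ω))
      - p ω * Real.log (marg p (fun ω => (f ω, h ω)) (f ω, h ω))
      - p ω * Real.log (marg p (fun ω => (g ω, h ω)) (g ω, h ω)) := by
    intro ω
    by_cases hω : p ω = 0
    · simp [hω]
    have q1 := (marg_pos hp (fun ω => (a ω, b ω)) hω).ne'
    have q2 := (marg_pos hp b hω).ne'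
    have q3 := (marg_pos hp (fun ω => (f ω, g ω, h ω)) hω).ne'
    have q4 := (marg_pos hp h hω).ne'
    have q5 := (marg_pos hp (fun ω => (f ω, h ω)) hω).ne'
    have q6 := (marg_pos hp (fun ω => (g ω, h ω)) hω).ne'
    unfold cratio
    rw [Real.log_mul (div_ne_zero q1 q2) (div_ne_zero (mul_ne_zero q3 q4) (mul_ne_zero q5 q6)),
      Real.log_div q1 q2, Real.log_div (mul_ne_zero q3 q4) (mul_ne_zero q5 q6),
      Real.log_mul q3 q4, Real.log_mul q5 q6]
    ring
  simp only [e, Finset.sum_sub_distrib, Finset.sum_add_distrib, cmi, condEnt, sub_mul, add_mul,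
    margEnt_mul_log]
  ring

/-- The unconditional analogue of `sum_log_cratio`. -/
theorem sum_log_ratio :
    ∑ ω, p ω * Real.log (marg p a (a ω) * (marg p (fun ω => (f ω, g ω)) (f ω, g ω) /
      (marg p f (f ω) * marg p g (g ω)))) = (mi p f g - margEnt p a) * Real.log 2 := by
  have e : ∀ ω, p ω * Real.log (marg p a (a ω) * (marg p (fun ω => (f ω, g ω)) (f ω, g ω) /
      (marg p f (f ω) * marg p g (g ω)))) =
      p ω * Real.log (marg p a (a ω)) + p ω * Real.log (marg p (fun ω => (f ω, g ω)) (f ω, g ω))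
      - p ω * Real.log (marg p f (f ω)) - p ω * Real.log (marg p g (g ω)) := by
    intro ω
    by_cases hω : p ω = 0
    · simp [hω]
    have q1 := (marg_pos hp a hω).ne'
    have q3 := (marg_pos hp (fun ω => (f ω, g ω)) hω).ne'
    have q5 := (marg_pos hp f hω).ne'
    have q6 := (marg_pos hp g hω).ne'
    rw [Real.log_mul q1 (div_ne_zero q3 (mul_ne_zero q5 q6)),
      Real.log_div q3 (mul_ne_zero q5 q6), Real.log_mul q5 q6]
    ring
  simp only [e, Finset.sum_sub_distrib, Finset.sum_add_distrib, mi, sub_mul, add_mul,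
    margEnt_mul_log]
  ring

end

omit [Fintype β] [Fintype γ] in
/-- If `f` has conditional pmf `q` given `h = vh`, the information ratio of `f` and `g` has mean at
most `1` when `f` is drawn from `q` independently of `g`. -/
theorem sum_info_le_one {p : Ω → ℝ} (hp : ∀ ω, 0 ≤ p ω) (f : Ω → α) (g : Ω → β) (h : Ω → γ)
    (q : α → ℝ) (vg : β) (vh : γ)
    (hq : ∀ a, marg p (fun ω => (f ω, h ω)) (a, vh) = q a * marg p h vh) :
    ∑ a, q a * (marg p (fun ω => (f ω, g ω, h ω)) (a, vg, vh) * marg p h vh /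
      (marg p (fun ω => (f ω, h ω)) (a, vh) * marg p (fun ω => (g ω, h ω)) (vg, vh))) ≤ 1 := by
  calc _ ≤ ∑ a, marg p (fun ω => (f ω, g ω, h ω)) (a, vg, vh) /
        marg p (fun ω => (g ω, h ω)) (vg, vh) := by
        refine Finset.sum_le_sum fun a _ => ?_
        by_cases h0 : q a * marg p h vh = 0
        · rw [hq, h0, zero_mul, div_zero, mul_zero]
          exact div_nonneg (marg_nonneg hp _ _) (marg_nonneg hp _ _)
        · rw [hq, ← mul_div_assoc, ← mul_assoc, mul_right_comm, mul_div_mul_left _ _ h0]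
    _ ≤ 1 := by
        rw [← Finset.sum_div, marg_sum_fst p f (fun ω => (g ω, h ω))]
        exact div_self_le_one _

end Marginal

/-! ### Marginals of the joint law of source, inputs and output -/

section Joint
variable {S T K W X1 X2 Y : Type*}
    [Fintype S] [Fintype T] [Fintype W] [Fintype X1] [Fintype X2] [Fintype Y]
    [DecidableEq S] [DecidableEq T] [DecidableEq K] [DecidableEq W] [DecidableEq X1]
    [DecidableEq X2]
    {pST : S → T → ℝ} {chan : X1 → X2 → Y → ℝ} (hchansum : ∀ x1 x2, ∑ y : Y, chan x1 x2 y = 1)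
    {pW : W → ℝ} (hpWsum : ∑ w : W, pW w = 1)
    {pX1 : S → W → X1 → ℝ} (hpX1sum : ∀ s w, ∑ x1 : X1, pX1 s w x1 = 1)
    {pX2 : T → W → X2 → ℝ} (hpX2sum : ∀ t w, ∑ x2 : X2, pX2 t w x2 = 1)
    {p : Omega6 S T W X1 X2 Y → ℝ}
    (hp : ∀ s t w x1 x2 y, p (s, t, w, x1, x2, y) =
        pW w * pST s t * pX1 s w x1 * pX2 t w x2 * chan x1 x2 y)
include hp hchansum

omit [DecidableEq T] in
include hpX1sum in
/-- Given `(X2, S, W)`, the input `X1` has the law `pX1`. -/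
theorem marg_X1 (x1 : X1) (x2 : X2) (s : S) (w : W) :
    marg p (fun ω => (mX1 ω, mX2 ω, mS ω, mW ω)) (x1, x2, s, w) =
      pX1 s w x1 * marg p (fun ω => (mX2 ω, mS ω, mW ω)) (x2, s, w) := by
  have h : ∀ s w (c d : ℝ), ∑ x1, c * pX1 s w x1 * d = c * d := fun s w c d => by
    rw [← Finset.sum_mul, ← Finset.mul_sum, hpX1sum, mul_one]
  simp only [marg, Fintype.sum_prod_type, mX1, mX2, mS, mW, hp, Prod.mk.injEq, ite_and,
    Finset.sum_ite_irrel, Finset.sum_const_zero, Finset.sum_ite_eq', Finset.mem_univ, if_true,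
    ← Finset.mul_sum, hchansum, mul_one, h]
  rw [Finset.mul_sum]
  exact Finset.sum_congr rfl fun t _ => by ring

omit [DecidableEq S] in
include hpX2sum in
/-- Given `(X1, T, W)`, the input `X2` has the law `pX2`. -/
theorem marg_X2 (x1 : X1) (x2 : X2) (t : T) (w : W) :
    marg p (fun ω => (mX2 ω, mX1 ω, mT ω, mW ω)) (x2, x1, t, w) =
      pX2 t w x2 * marg p (fun ω => (mX1 ω, mT ω, mW ω)) (x1, t, w) := by
  simp only [marg, Fintype.sum_prod_type, mX1, mX2, mT, mW, hp, Prod.mk.injEq, ite_and,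
    Finset.sum_ite_irrel, Finset.sum_const_zero, Finset.sum_ite_eq', Finset.mem_univ, if_true,
    ← Finset.mul_sum, hchansum, hpX2sum, mul_one]
  rw [Finset.mul_sum]
  exact Finset.sum_congr rfl fun t _ => by ring

omit [DecidableEq S] [DecidableEq T] in
theorem marg_X1X2KW (f : S → K) (x1 : X1) (x2 : X2) (k : K) (w : W) :
    marg p (fun ω => ((mX1 ω, mX2 ω), f (mS ω), mW ω)) ((x1, x2), k, w) =
      pW w * ∑ s, ∑ t, pX1 s w x1 * pX2 t w x2 * if f s = k then pST s t else 0 := by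
  simp only [marg, Fintype.sum_prod_type, mX1, mX2, mS, mW, hp, Prod.mk.injEq, ite_and,
    Finset.sum_ite_irrel, Finset.sum_const_zero, Finset.sum_ite_eq', Finset.mem_univ, if_true,
    ← Finset.mul_sum, hchansum, mul_one]
  rw [Finset.mul_sum]
  refine Finset.sum_congr rfl fun s _ => ?_
  split_ifs
  · rw [Finset.mul_sum]
    exact Finset.sum_congr rfl fun t _ => by ring
  · simp

omit [DecidableEq S] [DecidableEq T] [DecidableEq W] in
theorem marg_X1X2 (x1 : X1) (x2 : X2) :
    marg p (fun ω => (mX1 ω, mX2 ω)) (x1, x2) =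
      ∑ s, ∑ t, ∑ w, pW w * pX1 s w x1 * pX2 t w x2 * pST s t := by
  simp only [marg, Fintype.sum_prod_type, mX1, mX2, hp, Prod.mk.injEq, ite_and,
    Finset.sum_ite_irrel, Finset.sum_const_zero, Finset.sum_ite_eq', Finset.mem_univ, if_true,
    ← Finset.mul_sum, hchansum, mul_one]
  exact Finset.sum_congr rfl fun s _ => Finset.sum_congr rfl fun t _ =>
    Finset.sum_congr rfl fun w _ => by ring

include hpX1sum hpX2sum

omit [DecidableEq S] [DecidableEq T] [DecidableEq X1] [DecidableEq X2] in
theorem marg_KW (f : S → K) (k : K) (w : W) :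
    marg p (fun ω => (f (mS ω), mW ω)) (k, w) = pW w * ∑ s, ∑ t, if f s = k then pST s t else 0 := by
  simp only [marg, Fintype.sum_prod_type, mS, mW, hp, Prod.mk.injEq, ite_and,
    Finset.sum_ite_irrel, Finset.sum_const_zero, Finset.sum_ite_eq', Finset.mem_univ, if_true,
    ← Finset.mul_sum, hchansum, hpX1sum, hpX2sum, mul_one]
  rw [Finset.mul_sum]
  refine Finset.sum_congr rfl fun s _ => ?_
  rw [mul_ite, mul_zero]

include hpWsum

omit [DecidableEq W] [DecidableEq X1] [DecidableEq X2] in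
theorem marg_ST (s : S) (t : T) : marg p (fun ω => (mS ω, mT ω)) (s, t) = pST s t := by
  simp only [marg, Fintype.sum_prod_type, mS, mT, hp, Prod.mk.injEq, ite_and,
    Finset.sum_ite_irrel, Finset.sum_const_zero, Finset.sum_ite_eq', Finset.mem_univ, if_true,
    ← Finset.mul_sum, hchansum, hpX1sum, hpX2sum, mul_one]
  rw [← Finset.sum_mul, hpWsum, one_mul]

omit [DecidableEq W] [DecidableEq X1] [DecidableEq X2] in
theorem marg_STK (f : S → K) (s : S) (t : T) (k : K) :
    marg p (fun ω => ((mS ω, mT ω), f (mS ω))) ((s, t), k) = if f s = k then pST s t else 0 := by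
  rw [← marg_ST hchansum hpWsum hpX1sum hpX2sum hp s t]
  simp only [marg]
  by_cases h : f s = k
  · rw [if_pos h]
    refine Finset.sum_congr rfl fun ω _ => if_congr ?_ rfl rfl
    rw [Prod.mk.injEq]
    refine ⟨fun h' => h'.1, fun h' => ⟨h', ?_⟩⟩
    rw [← h, (Prod.mk.inj h').1]
  · rw [if_neg h]
    refine Finset.sum_eq_zero fun ω _ => if_neg fun h' => h ?_
    obtain ⟨h1, h2⟩ := Prod.mk.inj h'
    rw [← h2, (Prod.mk.inj h1).1]

omit [DecidableEq S] [DecidableEq T] [DecidableEq W] [DecidableEq X1] [DecidableEq X2] in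
theorem marg_K (f : S → K) (k : K) :
    marg p (fun ω => f (mS ω)) k = ∑ s, ∑ t, if f s = k then pST s t else 0 := by
  simp only [marg, Fintype.sum_prod_type, mS, hp,
    Finset.sum_ite_irrel, Finset.sum_const_zero,
    ← Finset.mul_sum, hchansum, hpX1sum, hpX2sum, mul_one]
  simp only [← Finset.sum_mul, hpWsum, one_mul]

end Joint

/-! ### Finite sums -/

section Sums
variable {ι κ α β : Type*} [Fintype ι] [Fintype κ] [Fintype α] [Fintype β]

theorem sum_swap4 (F : ι → κ → α → β → ℝ) :
    ∑ i, ∑ j, ∑ a, ∑ b, F i j a b = ∑ x : α × β, ∑ i, ∑ j, F i j x.1 x.2 := by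
  simp only [Fintype.sum_prod_type]
  calc _ = ∑ i, ∑ a, ∑ j, ∑ b, F i j a b := Finset.sum_congr rfl fun i _ => Finset.sum_comm
    _ = ∑ a, ∑ i, ∑ j, ∑ b, F i j a b := Finset.sum_comm
    _ = ∑ a, ∑ i, ∑ b, ∑ j, F i j a b :=
        Finset.sum_congr rfl fun a _ => Finset.sum_congr rfl fun i _ => Finset.sum_comm
    _ = _ := Finset.sum_congr rfl fun a _ => Finset.sum_comm

theorem weighted_sum_le_one {A : ι → ℝ} (hA : ∀ i, 0 ≤ A i) (hs : ∑ i, A i ≤ 1)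
    {q I : ι → α → ℝ} (hI : ∀ i, ∑ a, q i a * I i a ≤ 1) :
    ∑ i, ∑ a, q i a * (A i * I i a) ≤ 1 := by
  refine le_trans (Finset.sum_le_sum fun i _ => ?_) hs
  calc ∑ a, q i a * (A i * I i a) = A i * ∑ a, q i a * I i a := by
        rw [Finset.mul_sum]
        exact Finset.sum_congr rfl fun a _ => by ring
    _ ≤ A i := mul_le_of_le_one_right (hA i) (hI i)

end Sums

/-- **Proposition 1 (Cover-El Gamal-Salehi).**  A correlated source `(S,T)` with common
part `K = f(S) = g(T)` can be sent with arbitrarily small probability of error over the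
MAC `p(y|x1,x2)` if there are `W, X1, X2` with joint law
`p(w)·p(s,t)·p(x1|s,w)·p(x2|t,w)` such that `H(S|T) < I(X1;Y|X2,S,W)`,
`H(T|S) < I(X2;Y|X1,T,W)`, `H(S,T|K) < I(X1,X2;Y|K,W)`, and `H(S,T) < I(X1,X2;Y)`. -/
theorem cover_elgamal_salehi_MAC
    {S T K W X1 X2 Y : Type*}
    [Fintype S] [Fintype T] [Fintype K] [Fintype W] [Fintype X1] [Fintype X2] [Fintype Y]
    [DecidableEq S] [DecidableEq T] [DecidableEq K] [DecidableEq W] [DecidableEq X1]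
    [DecidableEq X2] [DecidableEq Y]
    -- the source
    (pST : S → T → ℝ) (hpSTnn : ∀ s t, 0 ≤ pST s t) (hpSTsum : ∑ s : S, ∑ t : T, pST s t = 1)
    -- the common part K = f(S) = g(T)
    (f : S → K) (g : T → K) (hcommon : ∀ s t, pST s t ≠ 0 → f s = g t)
    -- the channel
    (chan : X1 → X2 → Y → ℝ) (hchannn : ∀ x1 x2 y, 0 ≤ chan x1 x2 y)
    (hchansum : ∀ x1 x2, ∑ y : Y, chan x1 x2 y = 1)
    -- the auxiliary distributions
    (pW : W → ℝ) (hpWnn : ∀ w, 0 ≤ pW w) (hpWsum : ∑ w : W, pW w = 1)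
    (pX1 : S → W → X1 → ℝ) (hpX1nn : ∀ s w x1, 0 ≤ pX1 s w x1)
    (hpX1sum : ∀ s w, ∑ x1 : X1, pX1 s w x1 = 1)
    (pX2 : T → W → X2 → ℝ) (hpX2nn : ∀ t w x2, 0 ≤ pX2 t w x2)
    (hpX2sum : ∀ t w, ∑ x2 : X2, pX2 t w x2 = 1)
    -- the joint distribution of all the variables
    (p : Omega6 S T W X1 X2 Y → ℝ)
    (hp : ∀ s t w x1 x2 y,
      p (s, t, w, x1, x2, y) =
        pW w * pST s t * pX1 s w x1 * pX2 t w x2 * chan x1 x2 y)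
    -- the common-part random variable
    (vK : Omega6 S T W X1 X2 Y → K) (hvK : vK = fun ω => f (mS ω))
    -- the four inequalities
    (h1 : condEnt p mS mT < cmi p mX1 mY (fun ω => (mX2 ω, mS ω, mW ω)))
    (h2 : condEnt p mT mS < cmi p mX2 mY (fun ω => (mX1 ω, mT ω, mW ω)))
    (h3 : condEnt p (fun ω => (mS ω, mT ω)) vK <
      cmi p (fun ω => (mX1 ω, mX2 ω)) mY (fun ω => (vK ω, mW ω)))
    (h4 : margEnt p (fun ω => (mS ω, mT ω)) < mi p (fun ω => (mX1 ω, mX2 ω)) mY) :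
    MACSendable pST chan := by
  subst hvK
  have hp0 : ∀ ω, 0 ≤ p ω := by
    rintro ⟨s, t, w, x1, x2, y⟩
    rw [hp]
    exact mul_nonneg (mul_nonneg (mul_nonneg (mul_nonneg (hpWnn _) (hpSTnn _ _)) (hpX1nn _ _ _))
      (hpX2nn _ _ _)) (hchannn _ _ _)
  have hp1 : ∑ ω, p ω = 1 := by
    simp only [Fintype.sum_prod_type, hp, ← Finset.mul_sum, hchansum, hpX1sum, hpX2sum, mul_one,
      ← Finset.sum_mul, hpWsum, one_mul, hpSTsum]
  have hlog : 0 < Real.log 2 := Real.log_pos one_lt_two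
  refine sendable_of_ratios hpSTnn hpSTsum hcommon hchannn hchansum hpWnn hpWsum hpX1nn hpX1sum
    hpX2nn hpX2sum hp hp0 hp1
    (L1 := fun s t w x1 x2 y =>
      cratio p mS mT mX1 mY (fun ω => (mX2 ω, mS ω, mW ω)) s t x1 y (x2, s, w))
    (L2 := fun s t w x1 x2 y =>
      cratio p mT mS mX2 mY (fun ω => (mX1 ω, mT ω, mW ω)) t s x2 y (x1, t, w))
    (L3 := fun k s t w x1 x2 y =>
      cratio p (fun ω => (mS ω, mT ω)) (fun ω => f (mS ω)) (fun ω => (mX1 ω, mX2 ω)) mY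
        (fun ω => (f (mS ω), mW ω)) (s, t) k (x1, x2) y (k, w))
    (L4 := fun s t w x1 x2 y => marg p (fun ω => (mS ω, mT ω)) (s, t) *
      (marg p (fun ω => ((mX1 ω, mX2 ω), mY ω)) ((x1, x2), y) /
        (marg p (fun ω => (mX1 ω, mX2 ω)) (x1, x2) * marg p mY y)))
    (fun _ _ _ _ _ _ => cratio_nonneg hp0 ..) (fun _ _ _ _ _ _ => cratio_nonneg hp0 ..)
    (fun _ _ _ _ _ _ _ => cratio_nonneg hp0 ..)
    (fun _ _ _ _ _ _ => mul_nonneg (marg_nonneg hp0 _ _) (div_nonneg (marg_nonneg hp0 _ _)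
      (mul_nonneg (marg_nonneg hp0 _ _) (marg_nonneg hp0 _ _))))
    ?_ ?_ ?_ ?_
    (fun ω => cratio p mS mT mX1 mY (fun ω => (mX2 ω, mS ω, mW ω)) (mS ω) (mT ω) (mX1 ω) (mY ω)
      (mX2 ω, mS ω, mW ω))
    (fun ω => cratio p mT mS mX2 mY (fun ω => (mX1 ω, mT ω, mW ω)) (mT ω) (mS ω) (mX2 ω) (mY ω)
      (mX1 ω, mT ω, mW ω))
    (fun ω => cratio p (fun ω => (mS ω, mT ω)) (fun ω => f (mS ω)) (fun ω => (mX1 ω, mX2 ω)) mY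
      (fun ω => (f (mS ω), mW ω)) (mS ω, mT ω) (f (mS ω)) (mX1 ω, mX2 ω) (mY ω) (f (mS ω), mW ω))
    (fun ω => marg p (fun ω => (mS ω, mT ω)) (mS ω, mT ω) *
      (marg p (fun ω => ((mX1 ω, mX2 ω), mY ω)) ((mX1 ω, mX2 ω), mY ω) /
        (marg p (fun ω => (mX1 ω, mX2 ω)) (mX1 ω, mX2 ω) * marg p mY (mY ω))))
    (fun _ _ _ _ _ _ => rfl) (fun _ _ _ _ _ _ => rfl) (fun _ _ _ _ _ _ => rfl)
    (fun _ _ _ _ _ _ => rfl)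
    (fun ω h => cratio_pos hp0 mS mT mX1 mY (fun ω => (mX2 ω, mS ω, mW ω)) h)
    (fun ω h => cratio_pos hp0 mT mS mX2 mY (fun ω => (mX1 ω, mT ω, mW ω)) h)
    (fun ω h => cratio_pos hp0 (fun ω => (mS ω, mT ω)) (fun ω => f (mS ω))
      (fun ω => (mX1 ω, mX2 ω)) mY (fun ω => (f (mS ω), mW ω)) h)
    (fun ω h => mul_pos (marg_pos hp0 (fun ω => (mS ω, mT ω)) h)
      (div_pos (marg_pos hp0 (fun ω => ((mX1 ω, mX2 ω), mY ω)) h)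
        (mul_pos (marg_pos hp0 (fun ω => (mX1 ω, mX2 ω)) h) (marg_pos hp0 mY h))))
    ?_ ?_ ?_ ?_
  -- the four ratios have mean at most `1` under independent wrong codewords
  · intro t w x2 y
    unfold cratio
    refine weighted_sum_le_one
      (fun s => div_nonneg (marg_nonneg hp0 _ _) (marg_nonneg hp0 _ _)) ?_ fun s => ?_
    · rw [← Finset.sum_div, marg_sum_fst]
      exact div_self_le_one _
    · exact sum_info_le_one hp0 mX1 mY (fun ω => (mX2 ω, mS ω, mW ω)) (pX1 s w) y (x2, s, w)
        fun x1 => marg_X1 hchansum hpX1sum hp x1 x2 s w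
  · intro s w x1 y
    unfold cratio
    refine weighted_sum_le_one
      (fun t => div_nonneg (marg_nonneg hp0 _ _) (marg_nonneg hp0 _ _)) ?_ fun t => ?_
    · rw [← Finset.sum_div, marg_sum_fst]
      exact div_self_le_one _
    · exact sum_info_le_one hp0 mX2 mY (fun ω => (mX1 ω, mT ω, mW ω)) (pX2 t w) y (x1, t, w)
        fun x2 => marg_X2 hchansum hpX2sum hp x1 x2 t w
  · intro k w y
    unfold cratio
    -- a value `k` of probability `0` makes the ratio vanish, since `x / 0 = 0`
    by_cases hk : marg p (fun ω => f (mS ω)) k = 0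
    · simp only [hk, div_zero, zero_mul, mul_zero, Finset.sum_const_zero, zero_le_one]
    -- the weight of `x` is the conditional probability of `(X1, X2) = x` given `K = k` and `W = w`
    refine le_trans (le_of_eq ?_) (sum_info_le_one hp0 (fun ω => (mX1 ω, mX2 ω)) mY
      (fun ω => (f (mS ω), mW ω))
      (fun x => ∑ s, ∑ t, pX1 s w x.1 * pX2 t w x.2 *
        (marg p (fun ω => ((mS ω, mT ω), f (mS ω))) ((s, t), k) / marg p (fun ω => f (mS ω)) k))
      y (k, w) ?_)
    · rw [sum_swap4]
      simp only [Finset.sum_mul]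
      exact Finset.sum_congr rfl fun x _ => Finset.sum_congr rfl fun s _ =>
        Finset.sum_congr rfl fun t _ => by ring
    · rintro ⟨x1, x2⟩
      have e1 := marg_X1X2KW hchansum hp f x1 x2 k w
      have e2 := marg_KW hchansum hpX1sum hpX2sum hp f k w
      rw [← marg_K hchansum hpWsum hpX1sum hpX2sum hp f k] at e2
      refine e1.trans ?_
      rw [e2, mul_left_comm, Finset.sum_mul]
      congr 1
      refine Finset.sum_congr rfl fun s _ => ?_
      rw [Finset.sum_mul]
      refine Finset.sum_congr rfl fun t _ => ?_
      rw [marg_STK hchansum hpWsum hpX1sum hpX2sum hp f s t k, mul_assoc _ (_ / _),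
        div_mul_cancel₀ _ hk]
  · intro y
    calc _ = ∑ x : X1 × X2, marg p (fun ω => (mX1 ω, mX2 ω)) x *
          (marg p (fun ω => ((mX1 ω, mX2 ω), mY ω)) (x, y) /
            (marg p (fun ω => (mX1 ω, mX2 ω)) x * marg p mY y)) := by
          have : ∀ s t, ∑ w, ∑ x1, ∑ x2, pW w * pX1 s w x1 * pX2 t w x2 *
              (marg p (fun ω => (mS ω, mT ω)) (s, t) *
              (marg p (fun ω => ((mX1 ω, mX2 ω), mY ω)) ((x1, x2), y) /
              (marg p (fun ω => (mX1 ω, mX2 ω)) (x1, x2) * marg p mY y))) =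
              ∑ x1, ∑ x2, (∑ w, pW w * pX1 s w x1 * pX2 t w x2 * pST s t) *
              (marg p (fun ω => ((mX1 ω, mX2 ω), mY ω)) ((x1, x2), y) /
              (marg p (fun ω => (mX1 ω, mX2 ω)) (x1, x2) * marg p mY y)) := by
            intro s t
            rw [Finset.sum_comm]
            refine Finset.sum_congr rfl fun x1 _ => ?_
            rw [Finset.sum_comm]
            refine Finset.sum_congr rfl fun x2 _ => ?_
            rw [Finset.sum_mul]
            refine Finset.sum_congr rfl fun w _ => ?_
            rw [marg_ST hchansum hpWsum hpX1sum hpX2sum hp]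
            ring
          simp only [this]
          rw [sum_swap4]
          refine Finset.sum_congr rfl fun x _ => ?_
          have e := marg_X1X2 hchansum hp x.1 x.2
          simp only [← Finset.sum_mul] at e ⊢
          rw [← e]
      _ ≤ ∑ x : X1 × X2, marg p (fun ω => ((mX1 ω, mX2 ω), mY ω)) (x, y) / marg p mY y := by
          refine Finset.sum_le_sum fun x _ => ?_
          by_cases h0 : marg p (fun ω => (mX1 ω, mX2 ω)) x = 0
          · rw [h0, zero_mul]
            exact div_nonneg (marg_nonneg hp0 _ _) (marg_nonneg hp0 _ _)
          · rw [← mul_div_assoc, mul_div_mul_left _ _ h0]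
      _ ≤ 1 := by
          rw [← Finset.sum_div, marg_sum_fst p (fun ω => (mX1 ω, mX2 ω)) mY]
          exact div_self_le_one _
  -- the four expected logarithms are the gaps in the hypotheses, converted from bits to nats
  · rw [sum_log_cratio hp0 mS mT mX1 mY (fun ω => (mX2 ω, mS ω, mW ω))]
    exact mul_pos (sub_pos.2 h1) hlog
  · rw [sum_log_cratio hp0 mT mS mX2 mY (fun ω => (mX1 ω, mT ω, mW ω))]
    exact mul_pos (sub_pos.2 h2) hlog
  · rw [sum_log_cratio hp0 (fun ω => (mS ω, mT ω)) (fun ω => f (mS ω)) (fun ω => (mX1 ω, mX2 ω)) mY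
      (fun ω => (f (mS ω), mW ω))]
    exact mul_pos (sub_pos.2 h3) hlog
  · rw [sum_log_ratio hp0 (fun ω => (mS ω, mT ω)) (fun ω => (mX1 ω, mX2 ω)) mY]
    exact mul_pos (sub_pos.2 h4) hlog
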